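/- arXiv:1105.0585 — 3 statements merged into one kernel-verified Lean document; each statement's English description precedes it below -/
import Mathlib

section
/- First q-Hankel image of a q-Laguerre function: for every real ν > −1, every j ∈ ℕ and every real t with 0 < t < 1/√(1−q), it holds that ∫_0^{1/√(1−q)} d_q r · ( J^{(1)}_ν(rt|q²)/(rt)^ν ) · r^{2ν+1} · 𝓛^{(ν)}_j(r²/(1+q)|q²) · E_{q²}(−r²/(1+q)) = ( q^{2(j+1)(j+ν+1)} / [j]_{q²}! ) · ( t^{2j}/(1+q)^j ) · e_{q²}(−q²t²/(1+q)). -/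
open scoped BigOperators

noncomputable section

/-- The q-number `[u]_q = (q^u - 1)/(q - 1)`. -/
def qNum (q u : ℝ) : ℝ := (q ^ u - 1) / (q - 1)

/-- The q-factorial `[n]_q! = ∏_{i=1}^n [i]_q`. -/
def qFact (q : ℝ) (n : ℕ) : ℝ := ∏ i ∈ Finset.range n, qNum q ((i : ℝ) + 1)

/-- The q-Gamma function `Γ_q(t) = (1-q)^{1-t} ∏_{k=0}^∞ (1-q^{k+1})/(1-q^{k+t})`. -/
def qGamma (q t : ℝ) : ℝ :=
  (1 - q) ^ (1 - t) * ∏' k : ℕ, (1 - q ^ (k + 1)) / (1 - q ^ ((k : ℝ) + t))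

/-- The q-derivative `∂^q_t f(t) = (f(qt) - f(t))/((q-1)t)`.
The `q⁻¹`-derivative is `qDeriv q⁻¹`. -/
def qDeriv (q : ℝ) (f : ℝ → ℝ) (t : ℝ) : ℝ := (f (q * t) - f t) / ((q - 1) * t)

/-- The q-Pochhammer symbol `(a; q)_k = ∏_{l=0}^{k-1} (1 - a q^l)`. -/
def qPoch (a q : ℝ) (k : ℕ) : ℝ := ∏ l ∈ Finset.range k, (1 - a * q ^ l)

/-- The q-exponential `E_q(t) = ∑_{j=0}^∞ q^{j(j-1)/2} t^j/[j]_q!`. -/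
def qExpE (q t : ℝ) : ℝ := ∑' j : ℕ, q ^ (j * (j - 1) / 2) * t ^ j / qFact q j

/-- `e_q(-u) := 1/E_q(u)` (intended for `u ≥ 0`); `qExpe q u` denotes `e_q(-u)`. -/
def qExpe (q u : ℝ) : ℝ := (qExpE q u)⁻¹

/-- The first q-Bessel function `J^{(1)}_ν(x|q²)`. -/
def qBessel1 (q ν x : ℝ) : ℝ :=
  (x / (1 + q)) ^ ν *
    ∑' i : ℕ, (-1 : ℝ) ^ i / (qFact (q ^ 2) i * qGamma (q ^ 2) ((i : ℝ) + ν + 1)) *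
      (x / (1 + q)) ^ (2 * i)

/-- The second q-Bessel function `J^{(2)}_ν(x|q²)`. -/
def qBessel2 (q ν x : ℝ) : ℝ :=
  q ^ (ν ^ 2) * (x / (1 + q)) ^ ν *
    ∑' i : ℕ, q ^ (2 * (i : ℝ) * ((i : ℝ) + ν)) * (-1 : ℝ) ^ i /
        (qFact (q ^ 2) i * qGamma (q ^ 2) ((i : ℝ) + ν + 1)) *
      (x / (1 + q)) ^ (2 * i)

/-- The q-Laguerre polynomial `𝓛^{(α)}_j(u|q²)`. -/
def qLaguerre (q α : ℝ) (j : ℕ) (u : ℝ) : ℝ :=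
  ∑ i ∈ Finset.range (j + 1),
    q ^ ((j - i) * (j - i + 1)) * (-u) ^ i / (qFact (q ^ 2) (j - i) * qFact (q ^ 2) i) *
      (qPoch (q ^ (2 * (i : ℝ) + 2 * α + 2)) (q ^ 2) (j - i) / (1 - q ^ 2) ^ (j - i))

/-- The q-Laguerre polynomial `𝓛^{(α)}_j(u|q^{-2})`. -/
def qLaguerreInv (q α : ℝ) (j : ℕ) (u : ℝ) : ℝ :=
  q ^ (-(j : ℝ) * ((j : ℝ) + 1 + 2 * α)) *
    ∑ i ∈ Finset.range (j + 1),
      q ^ (2 * (i : ℝ) * ((i : ℝ) + α)) * (-u) ^ i / (qFact (q ^ 2) (j - i) * qFact (q ^ 2) i) *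
        (qPoch (q ^ (2 * (i : ℝ) + 2 * α + 2)) (q ^ 2) (j - i) / (1 - q ^ 2) ^ (j - i))

/-- The finite Jackson q-integral `∫_0^a f(t) d_q t = (1-q) a ∑_{k=0}^∞ f(q^k a) q^k`. -/
def jackson (q a : ℝ) (f : ℝ → ℝ) : ℝ := (1 - q) * a * ∑' k : ℕ, f (q ^ k * a) * q ^ k

/-- The infinite Jackson q-integral `∫_0^{γ·∞} f(t) d_q t = (1-q) γ ∑_{k=-∞}^∞ f(q^k γ) q^k`. -/
def jacksonInf (q γ : ℝ) (f : ℝ → ℝ) : ℝ := (1 - q) * γ * ∑' k : ℤ, f (q ^ k * γ) * q ^ k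

/-- The first q-Hankel transform `𝓗̄^{q,β}_ν`. -/
def hankel1 (q μ ν β : ℝ) (f : ℝ → ℝ) (t : ℝ) : ℝ :=
  (1 + q) / μ * jackson q (Real.sqrt (μ / ((1 - q ^ 2) * β)))
    (fun r => qBessel1 q ν ((1 + q) / μ * (r * t)) / (r * t) ^ ν * r ^ (2 * ν + 1) * f r)

/-- The second q-Hankel transform `𝓗^{q,γ}_ν`. -/
def hankel2 (q μ ν γ : ℝ) (f : ℝ → ℝ) (r : ℝ) : ℝ :=
  (1 + q) / μ * jacksonInf q γ
    (fun t => qBessel2 q ν (q * ((1 + q) / μ) * (r * t)) / (r * t) ^ ν * t ^ (2 * ν + 1) * f t)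

namespace QH

/-- `(p;p)_n`. -/
def pf (p : ℝ) (n : ℕ) : ℝ := ∏ l ∈ Finset.range n, (1 - p ^ (l + 1))

def EE (p x : ℝ) : ℝ := ∑' n : ℕ, p ^ (n * (n - 1) / 2) * (-x) ^ n / pf p n

def ee (p x : ℝ) : ℝ := ∑' n : ℕ, x ^ n / pf p n

lemma tri_succ (n : ℕ) : (n + 1) * (n + 1 - 1) / 2 = n * (n - 1) / 2 + n := by
  have h := Finset.sum_range_id (n + 1)
  have h' := Finset.sum_range_id n
  rw [← h, ← h', Finset.sum_range_succ]

lemma pf_succ (p : ℝ) (n : ℕ) : pf p (n + 1) = pf p n * (1 - p ^ (n + 1)) := by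
  simp [pf, Finset.prod_range_succ]

lemma pf_zero (p : ℝ) : pf p 0 = 1 := by simp [pf]

variable {p : ℝ}

lemma one_sub_pos (hp0 : 0 < p) (hp1 : p < 1) (n : ℕ) : 0 < 1 - p ^ (n + 1) :=
  sub_pos.2 (pow_lt_one₀ hp0.le hp1 (Nat.succ_ne_zero n))

lemma pf_pos (hp0 : 0 < p) (hp1 : p < 1) (n : ℕ) : 0 < pf p n :=
  Finset.prod_pos fun _ _ => one_sub_pos hp0 hp1 _

lemma tendsto_one_sub (hp0 : 0 < p) (hp1 : p < 1) :
    Filter.Tendsto (fun n : ℕ => 1 - p ^ (n + 1)) Filter.atTop (nhds 1) := by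
  have h := (tendsto_pow_atTop_nhds_zero_of_lt_one hp0.le hp1).comp (Filter.tendsto_add_atTop_nat 1)
  simpa using h.const_sub 1

lemma summ_E (hp0 : 0 < p) (hp1 : p < 1) (x : ℝ) :
    Summable (fun n : ℕ => p ^ (n * (n - 1) / 2) * x ^ n / pf p n) := by
  by_cases hx : x = 0
  · refine summable_of_ne_finset_zero (s := {0}) fun n hn => ?_
    have : n ≠ 0 := by simpa using hn
    simp [hx, this]
  refine summable_of_ratio_test_tendsto_lt_one (l := 0) one_pos ?_ ?_
  · filter_upwards with n
    have := (pf_pos hp0 hp1 n).ne'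
    positivity
  · have h := ((tendsto_pow_atTop_nhds_zero_of_lt_one hp0.le hp1).mul_const |x|).div
      (tendsto_one_sub hp0 hp1) one_ne_zero
    simp only [zero_mul, zero_div] at h
    refine h.congr fun n => ?_
    have h1 := pf_pos hp0 hp1 n
    have h2 := one_sub_pos hp0 hp1 n
    rw [tri_succ, pf_succ, Pi.div_apply]
    simp only [norm_mul, norm_div, norm_pow, Real.norm_eq_abs, abs_of_pos h1, abs_of_pos h2,
      abs_of_pos hp0]
    have : |x| ≠ 0 := by simpa using hx
    field_simp
    ring

lemma summ_e (hp0 : 0 < p) (hp1 : p < 1) (x : ℝ) (hx1 : |x| < 1) :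
    Summable (fun n : ℕ => x ^ n / pf p n) := by
  by_cases hx : x = 0
  · refine summable_of_ne_finset_zero (s := {0}) fun n hn => ?_
    have : n ≠ 0 := by simpa using hn
    simp [hx, this]
  refine summable_of_ratio_test_tendsto_lt_one (l := |x|) hx1 ?_ ?_
  · filter_upwards with n
    have := (pf_pos hp0 hp1 n).ne'
    positivity
  · have h := (tendsto_const_nhds (x := |x|)).div
      (tendsto_one_sub hp0 hp1) one_ne_zero
    simp only [div_one] at h
    refine h.congr fun n => ?_
    have h1 := pf_pos hp0 hp1 n
    have h2 := one_sub_pos hp0 hp1 n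
    rw [pf_succ, Pi.div_apply]
    simp only [norm_mul, norm_div, norm_pow, Real.norm_eq_abs, abs_of_pos h1, abs_of_pos h2]
    have : |x| ≠ 0 := by simpa using hx
    field_simp
    ring

lemma EE_zero : EE p 0 = 1 := by
  unfold EE
  rw [tsum_eq_single 0 (by intro n hn; simp [hn])]
  simp [pf_zero]

lemma ee_zero : ee p 0 = 1 := by
  unfold ee
  rw [tsum_eq_single 0 (by intro n hn; simp [hn])]
  simp [pf_zero]

lemma EE_rec (hp0 : 0 < p) (hp1 : p < 1) (x : ℝ) : EE p x = (1 - x) * EE p (p * x) := by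
  have h1 := summ_E hp0 hp1 (-x)
  have h2 := summ_E hp0 hp1 (-(p * x))
  have h : EE p x - EE p (p * x) = -x * EE p (p * x) := by
    unfold EE
    rw [← h1.tsum_sub h2, ← tsum_mul_left, (h1.sub h2).tsum_eq_zero_add]
    simp only [pow_zero, sub_self, zero_add]
    refine tsum_congr fun n => ?_
    have h3 := (pf_pos hp0 hp1 n).ne'
    have h4 := (one_sub_pos hp0 hp1 n).ne'
    rw [tri_succ, pf_succ, show -(p * x) = p * -x by ring, mul_pow, mul_pow]
    field_simp
    ring
  linarith

lemma ee_rec (hp0 : 0 < p) (hp1 : p < 1) (x : ℝ) (hx : |x| < 1) :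
    ee p (p * x) = (1 - x) * ee p x := by
  have hx' : |p * x| < 1 := by
    rw [abs_mul, abs_of_pos hp0]
    nlinarith [abs_nonneg x]
  have h1 := summ_e hp0 hp1 x hx
  have h2 := summ_e hp0 hp1 (p * x) hx'
  have h : ee p x - ee p (p * x) = x * ee p x := by
    unfold ee
    rw [← h1.tsum_sub h2, ← tsum_mul_left, (h1.sub h2).tsum_eq_zero_add]
    simp only [pow_zero, sub_self, zero_add]
    refine tsum_congr fun n => ?_
    have h3 := (pf_pos hp0 hp1 n).ne'
    have h4 := (one_sub_pos hp0 hp1 n).ne'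
    rw [pf_succ, mul_pow]
    field_simp
    ring
  linarith

lemma EE_cont (hp0 : 0 < p) (hp1 : p < 1) (R : ℝ) : ContinuousOn (EE p) (Set.Icc (-R) R) := by
  unfold EE
  refine continuousOn_tsum (u := fun n : ℕ => p ^ (n * (n - 1) / 2) * R ^ n / pf p n)
    (fun n => by fun_prop) (summ_E hp0 hp1 R) ?_
  intro n x hx
  have h3 := pf_pos hp0 hp1 n
  have : |x| ≤ R := abs_le.2 hx
  simp only [norm_mul, norm_div, norm_pow, Real.norm_eq_abs, abs_of_pos h3, abs_of_pos hp0, abs_neg]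
  gcongr

lemma ee_cont (hp0 : 0 < p) (hp1 : p < 1) (R : ℝ) (hR0 : 0 ≤ R) (hR : R < 1) :
    ContinuousOn (ee p) (Set.Icc (-R) R) := by
  unfold ee
  refine continuousOn_tsum (u := fun n : ℕ => R ^ n / pf p n)
    (fun n => by fun_prop) (summ_e hp0 hp1 R (by rwa [abs_of_nonneg hR0])) ?_
  intro n x hx
  have h3 := pf_pos hp0 hp1 n
  have : |x| ≤ R := abs_le.2 hx
  simp only [norm_div, norm_pow, Real.norm_eq_abs, abs_of_pos h3]
  gcongr

lemma tends_x (hp0 : 0 < p) (hp1 : p < 1) (x : ℝ) :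
    Filter.Tendsto (fun n : ℕ => p ^ n * x) Filter.atTop (nhdsWithin 0 (Set.Icc (-|x|) |x|)) := by
  rw [tendsto_nhdsWithin_iff]
  constructor
  · simpa using (tendsto_pow_atTop_nhds_zero_of_lt_one hp0.le hp1).mul_const x
  · filter_upwards with n
    have : |p ^ n * x| ≤ |x| := by
      rw [abs_mul, abs_of_pos (by positivity)]
      exact mul_le_of_le_one_left (abs_nonneg x) (pow_le_one₀ hp0.le hp1.le)
    exact abs_le.1 this

lemma EE_lim (hp0 : 0 < p) (hp1 : p < 1) (x : ℝ) :
    Filter.Tendsto (fun n : ℕ => EE p (p ^ n * x)) Filter.atTop (nhds 1) := by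
  have h := (EE_cont hp0 hp1 |x| 0 (by simp)).tendsto.comp (tends_x hp0 hp1 x)
  rwa [EE_zero] at h

lemma ee_lim (hp0 : 0 < p) (hp1 : p < 1) (x : ℝ) (hx : |x| < 1) :
    Filter.Tendsto (fun n : ℕ => ee p (p ^ n * x)) Filter.atTop (nhds 1) := by
  have h := (ee_cont hp0 hp1 |x| (abs_nonneg x) hx 0 (by simp)).tendsto.comp (tends_x hp0 hp1 x)
  rwa [ee_zero] at h

lemma EE_iter (hp0 : 0 < p) (hp1 : p < 1) (x : ℝ) (n : ℕ) :
    EE p x = qPoch x p n * EE p (p ^ n * x) := by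
  induction n with
  | zero => simp [qPoch]
  | succ n ih =>
    rw [ih, EE_rec hp0 hp1, qPoch, qPoch, Finset.prod_range_succ, pow_succ']
    ring_nf

lemma ee_mul_EE (hp0 : 0 < p) (hp1 : p < 1) (x : ℝ) (hx : |x| < 1) : ee p x * EE p x = 1 := by
  have key : ∀ n : ℕ, ee p (p ^ n * x) * EE p (p ^ n * x) = ee p x * EE p x := by
    intro n
    induction n with
    | zero => simp
    | succ n ih =>
      rw [← ih, EE_rec hp0 hp1 (p ^ n * x), pow_succ', mul_assoc, ee_rec hp0 hp1]
      · ring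
      · rw [abs_mul, abs_of_pos (by positivity)]
        exact lt_of_le_of_lt
          (mul_le_of_le_one_left (abs_nonneg x) (pow_le_one₀ hp0.le hp1.le)) hx
  have h := (ee_lim hp0 hp1 x hx).mul (EE_lim hp0 hp1 x)
  simp only [key, mul_one] at h
  exact tendsto_nhds_unique tendsto_const_nhds h

lemma EE_ne (hp0 : 0 < p) (hp1 : p < 1) (x : ℝ) (hx : |x| < 1) : EE p x ≠ 0 :=
  right_ne_zero_of_mul_eq_one (ee_mul_EE hp0 hp1 x hx)

lemma ee_eq (hp0 : 0 < p) (hp1 : p < 1) (x : ℝ) (hx : |x| < 1) : ee p x = (EE p x)⁻¹ :=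
  eq_inv_of_mul_eq_one_left (ee_mul_EE hp0 hp1 x hx)

lemma poch_lim (hp0 : 0 < p) (hp1 : p < 1) (x : ℝ) :
    Filter.Tendsto (fun n : ℕ => qPoch x p n) Filter.atTop (nhds (EE p x)) := by
  have h := EE_lim hp0 hp1 x
  have h2 := (tendsto_const_nhds (x := EE p x)).div h one_ne_zero
  rw [div_one] at h2
  refine h2.congr' ?_
  filter_upwards [h.eventually_ne one_ne_zero] with n hn
  rw [Pi.div_apply, EE_iter hp0 hp1 x n]
  field_simp

lemma EE_mem (hp0 : 0 < p) (hp1 : p < 1) (x : ℝ) (hx0 : 0 ≤ x) (hx : x ≤ 1) :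
    0 ≤ EE p x ∧ EE p x ≤ 1 := by
  have hf : ∀ l : ℕ, 0 ≤ 1 - x * p ^ l ∧ 1 - x * p ^ l ≤ 1 := by
    intro l
    have h1 : p ^ l ≤ 1 := pow_le_one₀ hp0.le hp1.le
    have h2 : 0 < p ^ l := by positivity
    constructor <;> nlinarith
  constructor
  · refine ge_of_tendsto' (poch_lim hp0 hp1 x) fun n => ?_
    exact Finset.prod_nonneg fun l _ => (hf l).1
  · refine le_of_tendsto' (poch_lim hp0 hp1 x) fun n => ?_
    exact Finset.prod_le_one (fun l _ => (hf l).1) fun l _ => (hf l).2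

lemma EE_one (hp0 : 0 < p) (hp1 : p < 1) : EE p 1 = 0 := by
  rw [EE_rec hp0 hp1]; simp

lemma EE_pow (hp0 : 0 < p) (hp1 : p < 1) (n : ℕ) : EE p (p ^ (n + 1)) = EE p p / pf p n := by
  have h3 := (pf_pos hp0 hp1 n).ne'
  have : qPoch p p n = pf p n := by
    unfold qPoch pf
    exact Finset.prod_congr rfl fun l _ => by ring
  rw [EE_iter hp0 hp1 p n, this, pow_succ]
  field_simp

lemma EEp_pos (hp0 : 0 < p) (hp1 : p < 1) : 0 < EE p p :=
  lt_of_le_of_ne (EE_mem hp0 hp1 p hp0.le hp1.le).1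
    (EE_ne hp0 hp1 p (by rwa [abs_of_pos hp0])).symm

lemma inv_pf_le (hp0 : 0 < p) (hp1 : p < 1) (n : ℕ) : (pf p n)⁻¹ ≤ (EE p p)⁻¹ := by
  have h := EE_pow hp0 hp1 n
  have h1 := (EE_mem hp0 hp1 (p ^ (n + 1)) (by positivity) (pow_le_one₀ hp0.le hp1.le)).2
  rw [h, div_le_one (pf_pos hp0 hp1 n)] at h1
  exact inv_anti₀ (EEp_pos hp0 hp1) h1

/-- infinite product of the q-Gamma function -/
lemma gamma_prod (hp0 : 0 < p) (hp1 : p < 1) (x : ℝ) (hx0 : 0 < x) (hx : x < 1) :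
    ∏' k : ℕ, (1 - p ^ (k + 1)) / (1 - x * p ^ k) = EE p p / EE p x := by
  have hden : ∀ k : ℕ, 1 - x ≤ 1 - x * p ^ k := by
    intro k
    have h1 : p ^ k ≤ 1 := pow_le_one₀ hp0.le hp1.le
    nlinarith
  have hm : Multipliable fun k : ℕ => (1 - p ^ (k + 1)) / (1 - x * p ^ k) := by
    have e : ∀ k : ℕ, (1 - p ^ (k + 1)) / (1 - x * p ^ k)
        = 1 + (x - p) * p ^ k / (1 - x * p ^ k) := by
      intro k
      have : 1 - x * p ^ k ≠ 0 := by have := hden k; linarith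
      field_simp
      ring
    simp only [e]
    refine multipliable_one_add_of_summable ?_
    refine Summable.of_nonneg_of_le (fun _ => norm_nonneg _) (fun k => ?_)
      ((summable_geometric_of_lt_one hp0.le hp1).mul_left (|x - p| / (1 - x)))
    have h1 := hden k
    have h2 : 0 < 1 - x := by linarith
    rw [norm_div, norm_mul, norm_pow, Real.norm_eq_abs, Real.norm_eq_abs, Real.norm_eq_abs,
      abs_of_pos hp0, abs_of_pos (by linarith : 0 < 1 - x * p ^ k), div_mul_eq_mul_div]
    gcongr
  have h1 := hm.hasProd.tendsto_prod_nat
  have h2 := (poch_lim hp0 hp1 p).div (poch_lim hp0 hp1 x)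
    (EE_ne hp0 hp1 x (by rwa [abs_of_pos hx0]))
  refine tendsto_nhds_unique h1 (h2.congr fun n => ?_)
  rw [Pi.div_apply, qPoch, qPoch, ← Finset.prod_div_distrib]
  exact Finset.prod_congr rfl fun l _ => by rw [pow_succ']

/-- terms of the Chu-Vandermonde sum -/
def ut (p b c : ℝ) (m l : ℕ) : ℝ :=
  (-1) ^ l * p ^ (l + (m + 1) * m / 2) * qPoch (b * p ^ l) p m * qPoch (b * c) p l /
    (pf p m * pf p l)

lemma poch_succ (a : ℝ) (n : ℕ) : qPoch a p (n + 1) = qPoch a p n * (1 - a * p ^ n) := by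
  simp [qPoch, Finset.prod_range_succ]

lemma poch_succ' (a : ℝ) (n : ℕ) : qPoch a p (n + 1) = (1 - a) * qPoch (a * p) p n := by
  simp only [qPoch, Finset.prod_range_succ', pow_zero, mul_one]
  rw [mul_comm]
  congr 1
  exact Finset.prod_congr rfl fun l _ => by ring

lemma chu (hp0 : 0 < p) (hp1 : p < 1) (c : ℝ) (j : ℕ) : ∀ b : ℝ,
    ∑ x ∈ Finset.HasAntidiagonal.antidiagonal j, ut p b c x.1 x.2 =
      p ^ ((j + 1) * j / 2) * b ^ j * (∏ l ∈ Finset.range j, (c - p ^ l)) / pf p j := by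
  induction j with
  | zero => intro b; simp [ut, qPoch, pf_zero]
  | succ j ih =>
    intro b
    have hj := (one_sub_pos hp0 hp1 j).ne'
    have key : (1 - p ^ (j + 1)) * ∑ x ∈ Finset.HasAntidiagonal.antidiagonal (j + 1), ut p b c x.1 x.2 =
        p ^ (j + 1) * (1 - b * p ^ j) * (∑ x ∈ Finset.HasAntidiagonal.antidiagonal j, ut p b c x.1 x.2)
          - p * (1 - b * c) * ∑ x ∈ Finset.HasAntidiagonal.antidiagonal j, ut p (b * p) c x.1 x.2 := by
      have e1 : (1 - p ^ (j + 1)) * ∑ x ∈ Finset.HasAntidiagonal.antidiagonal (j + 1), ut p b c x.1 x.2 =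
          ∑ x ∈ Finset.HasAntidiagonal.antidiagonal (j + 1), p ^ x.2 * (1 - p ^ x.1) * ut p b c x.1 x.2 +
          ∑ x ∈ Finset.HasAntidiagonal.antidiagonal (j + 1), (1 - p ^ x.2) * ut p b c x.1 x.2 := by
        rw [← Finset.sum_add_distrib, Finset.mul_sum]
        refine Finset.sum_congr rfl fun x hx => ?_
        rw [← Finset.HasAntidiagonal.mem_antidiagonal.1 hx, pow_add]
        ring
      rw [e1, Finset.Nat.sum_antidiagonal_succ, Finset.Nat.sum_antidiagonal_succ']
      simp only [pow_zero, sub_self, mul_zero, zero_mul, zero_add, add_zero]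
      rw [Finset.mul_sum, Finset.mul_sum, sub_eq_add_neg, ← Finset.sum_neg_distrib]
      congr 1
      · refine Finset.sum_congr rfl fun x hx => ?_
        obtain ⟨m, l⟩ := x
        have hml : m + l = j := Finset.HasAntidiagonal.mem_antidiagonal.1 hx
        have h3 := (pf_pos hp0 hp1 m).ne'
        have h4 := (pf_pos hp0 hp1 l).ne'
        have h5 := (one_sub_pos hp0 hp1 m).ne'
        have ht : (m + 1 + 1) * (m + 1) / 2 = (m + 1) * m / 2 + (m + 1) := tri_succ (m + 1)
        simp only [ut, pf_succ, poch_succ, ht, ← hml]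
        field_simp
        ring
      · refine Finset.sum_congr rfl fun x hx => ?_
        obtain ⟨m, l⟩ := x
        have h3 := (pf_pos hp0 hp1 m).ne'
        have h4 := (pf_pos hp0 hp1 l).ne'
        have h5 := (one_sub_pos hp0 hp1 l).ne'
        have ha : b * p ^ (l + 1) = b * p * p ^ l := by ring
        have hb : b * c * p = b * p * c := by ring
        simp only [ut, pf_succ, poch_succ' (b * c), ha, hb]
        field_simp
        ring
    rw [ih b, ih (b * p)] at key
    have h3 := (pf_pos hp0 hp1 j).ne'
    have ht : (j + 1 + 1) * (j + 1) / 2 = (j + 1) * j / 2 + (j + 1) := tri_succ (j + 1)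
    rw [eq_div_iff (pf_pos hp0 hp1 (j + 1)).ne', pf_succ, mul_comm (pf p j), ← mul_assoc,
      mul_comm _ (1 - p ^ (j + 1)), key, Finset.prod_range_succ, ht]
    field_simp
    ring

/-- coefficients of the Bessel series -/
def Bc (p b z : ℝ) (i : ℕ) : ℝ := (-z) ^ i * EE p (b * p ^ i) / (pf p i * EE p p)

/-- coefficients of the Laguerre polynomial -/
def Ac (p b : ℝ) (j l : ℕ) : ℝ :=
  (-1) ^ l * p ^ ((j - l + 1) * (j - l) / 2) * qPoch (b * p ^ l) p (j - l) /
    (pf p (j - l) * pf p l)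

lemma sum_k (hp0 : 0 < p) (hp1 : p < 1) (y : ℝ) (hy0 : 0 < y) (hy : y < 1) :
    ∑' k : ℕ, y ^ k * EE p (p ^ k) = y * EE p p / EE p y := by
  have hs : Summable fun k : ℕ => y ^ k * EE p (p ^ k) := by
    refine Summable.of_nonneg_of_le (fun k => ?_) (fun k => ?_)
      (summable_geometric_of_lt_one hy0.le hy)
    · have := (EE_mem hp0 hp1 (p ^ k) (by positivity) (pow_le_one₀ hp0.le hp1.le)).1
      positivity
    · exact mul_le_of_le_one_right (by positivity)
        (EE_mem hp0 hp1 (p ^ k) (by positivity) (pow_le_one₀ hp0.le hp1.le)).2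
  rw [hs.tsum_eq_zero_add]
  simp only [pow_zero, EE_one hp0 hp1, mul_zero, zero_add]
  rw [div_eq_mul_inv, ← ee_eq hp0 hp1 y (by rwa [abs_of_pos hy0]), ee, ← tsum_mul_left]
  refine tsum_congr fun k => ?_
  rw [EE_pow hp0 hp1]
  ring

lemma Bc_bound (hp0 : 0 < p) (hp1 : p < 1) (b z : ℝ) (hb0 : 0 < b) (hb1 : b < 1)
    (hz0 : 0 < z) (i : ℕ) : |Bc p b z i| ≤ ((EE p p)⁻¹ * (EE p p)⁻¹) * z ^ i := by
  have h1 := EEp_pos hp0 hp1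
  have h2 := inv_pf_le hp0 hp1 i
  have h3 := pf_pos hp0 hp1 i
  have h5 : p ^ i ≤ 1 := pow_le_one₀ hp0.le hp1.le
  have h6 : 0 < p ^ i := by positivity
  have h4 := EE_mem hp0 hp1 (b * p ^ i) (by positivity) (by nlinarith)
  unfold Bc
  rw [abs_div, abs_mul, abs_pow, abs_neg, abs_of_pos hz0, abs_of_nonneg h4.1,
    abs_of_pos (by positivity), div_eq_mul_inv, mul_inv]
  calc z ^ i * EE p (b * p ^ i) * ((pf p i)⁻¹ * (EE p p)⁻¹)
      ≤ z ^ i * 1 * ((EE p p)⁻¹ * (EE p p)⁻¹) := by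
        gcongr
        exact h4.2
    _ = _ := by ring

lemma prod_zero (j i : ℕ) (h : i < j) : ∏ l ∈ Finset.range j, (p ^ i - p ^ l) = 0 :=
  Finset.prod_eq_zero (Finset.mem_range.2 h) (sub_self _)

lemma prod_shift (hp0 : 0 < p) (hp1 : p < 1) (j m : ℕ) :
    ∏ l ∈ Finset.range j, (p ^ (m + j) - p ^ l) =
      (-1) ^ j * p ^ (j * (j - 1) / 2) * pf p (m + j) / pf p m := by
  induction j generalizing m with
  | zero => simp [(pf_pos hp0 hp1 m).ne']
  | succ j ih =>
    have h3 := (pf_pos hp0 hp1 m).ne'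
    have h5 := (one_sub_pos hp0 hp1 m).ne'
    have e : m + (j + 1) = (m + 1) + j := by ring
    rw [Finset.prod_range_succ, e, ih (m + 1), pf_succ, tri_succ]
    field_simp
    ring

lemma main_sum (hp0 : 0 < p) (hp1 : p < 1) (b z : ℝ) (hb0 : 0 < b) (hb1 : b < 1)
    (hz0 : 0 < z) (hz1 : z < 1) (j : ℕ) :
    ∑' k : ℕ, (∑' i : ℕ, Bc p b z i * p ^ (k * i)) *
        (b ^ k * (∑ l ∈ Finset.range (j + 1), Ac p b j l * p ^ (k * l)) * EE p (p ^ k)) =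
      z ^ j * b ^ (j + 1) * p ^ (j * (j + 1)) / pf p j * (EE p (-(p * z)))⁻¹ := by
  have hE := EEp_pos hp0 hp1
  have hple : ∀ k : ℕ, p ^ k ≤ 1 := fun k => pow_le_one₀ hp0.le hp1.le
  have hEk : ∀ k : ℕ, 0 ≤ EE p (p ^ k) ∧ EE p (p ^ k) ≤ 1 := fun k =>
    EE_mem hp0 hp1 (p ^ k) (by positivity) (hple k)
  set F : ℕ → ℕ → ℕ → ℝ := fun l k i =>
    Bc p b z i * p ^ (k * i) * (b ^ k * (Ac p b j l * p ^ (k * l)) * EE p (p ^ k)) with hF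
  -- summability
  have hsum : ∀ l, Summable (Function.uncurry (F l)) := by
    intro l
    have hg := (summable_geometric_of_lt_one hb0.le hb1).mul_of_nonneg
      ((summable_geometric_of_lt_one hz0.le hz1)) (fun _ => by positivity)
      (fun _ => by positivity)
    refine Summable.of_norm_bounded
      (hg.mul_left (|Ac p b j l| * ((EE p p)⁻¹ * (EE p p)⁻¹))) ?_
    rintro ⟨k, i⟩
    simp only [Function.uncurry, hF, norm_mul, Real.norm_eq_abs]
    have h1 := Bc_bound hp0 hp1 b z hb0 hb1 hz0 i
    rw [abs_of_nonneg (hEk k).1, abs_of_pos (by positivity : 0 < b ^ k),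
      abs_of_pos (by positivity : 0 < p ^ (k * i)), abs_of_pos (by positivity : 0 < p ^ (k * l))]
    have h2 := hple (k * i)
    have h3 := hple (k * l)
    have h4 := (hEk k).2
    have h5 := (hEk k).1
    calc |Bc p b z i| * p ^ (k * i) * (b ^ k * (|Ac p b j l| * p ^ (k * l)) * EE p (p ^ k))
        ≤ (((EE p p)⁻¹ * (EE p p)⁻¹) * z ^ i) * 1 * (b ^ k * (|Ac p b j l| * 1) * 1) := by
          gcongr
      _ = _ := by ring
  have hsumT : Summable (Function.uncurry fun k i => ∑ l ∈ Finset.range (j + 1), F l k i) := by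
    have := summable_sum (f := fun l => Function.uncurry (F l)) (s := Finset.range (j + 1))
      (fun l _ => hsum l)
    refine this.congr fun x => ?_
    rfl
  have e1 : ∀ k : ℕ, (∑' i : ℕ, Bc p b z i * p ^ (k * i)) *
        (b ^ k * (∑ l ∈ Finset.range (j + 1), Ac p b j l * p ^ (k * l)) * EE p (p ^ k)) =
      ∑' i : ℕ, ∑ l ∈ Finset.range (j + 1), F l k i := by
    intro k
    rw [← tsum_mul_right]
    refine tsum_congr fun i => ?_
    simp only [hF]
    rw [← Finset.mul_sum, ← Finset.sum_mul, ← Finset.mul_sum]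
  simp only [e1]
  rw [← Summable.tsum_comm hsumT]
  have e2 : ∀ i : ℕ, ∑' k : ℕ, ∑ l ∈ Finset.range (j + 1), F l k i =
      (-z) ^ i * b * p ^ i / pf p i *
        (p ^ ((j + 1) * j / 2) * b ^ j * (∏ l ∈ Finset.range j, (p ^ i - p ^ l)) / pf p j) := by
    intro i
    have hc : ∑ x ∈ Finset.HasAntidiagonal.antidiagonal j, ut p b (p ^ i) x.1 x.2 =
        ∑ l ∈ Finset.range (j + 1), ut p b (p ^ i) (j - l) l := by
      rw [← Finset.Nat.sum_antidiagonal_swap]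
      exact Finset.Nat.sum_antidiagonal_eq_sum_range_succ (fun l m => ut p b (p ^ i) m l) j
    have hsi : ∀ l ∈ Finset.range (j + 1), Summable fun k => F l k i :=
      fun l _ => (hsum l).prod_symm.prod_factor i
    rw [Summable.tsum_finsetSum hsi,
      ← chu hp0 hp1 (p ^ i) j b, hc, Finset.mul_sum]
    refine Finset.sum_congr rfl fun l _ => ?_
    have hy0 : 0 < b * p ^ (i + l) := by positivity
    have hy1 : b * p ^ (i + l) < 1 := by
      have := hple (i + l)
      nlinarith
    have e4 : ∀ k : ℕ, F l k i =
        (Bc p b z i * Ac p b j l) * ((b * p ^ (i + l)) ^ k * EE p (p ^ k)) := by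
      intro k
      simp only [hF]
      rw [mul_pow, ← pow_mul, show (i + l) * k = k * i + k * l by ring, pow_add]
      ring
    simp only [e4]
    rw [tsum_mul_left, sum_k hp0 hp1 _ hy0 hy1]
    have h3 := (pf_pos hp0 hp1 i).ne'
    have h4 := (pf_pos hp0 hp1 l).ne'
    have h5 := (pf_pos hp0 hp1 (j - l)).ne'
    have h6 := EE_ne hp0 hp1 (b * p ^ (i + l)) (by rwa [abs_of_pos hy0])
    have h7 : EE p (b * p ^ i) = qPoch (b * p ^ i) p l * EE p (b * p ^ (i + l)) := by
      rw [EE_iter hp0 hp1 (b * p ^ i) l]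
      congr 2
      ring
    unfold Bc Ac ut
    rw [h7]
    field_simp
    ring
  simp only [e2]
  have hz' : |-(p * z)| < 1 := by
    rw [abs_neg, abs_of_pos (by positivity)]
    nlinarith
  rw [← ee_eq hp0 hp1 _ hz', ee, ← tsum_mul_left]
  set G : ℕ → ℝ := fun i => (-z) ^ i * b * p ^ i / pf p i *
        (p ^ ((j + 1) * j / 2) * b ^ j * (∏ l ∈ Finset.range j, (p ^ i - p ^ l)) / pf p j) with hG
  have e3 : ∀ m, G (m + j) = z ^ j * b ^ (j + 1) * p ^ (j * (j + 1)) / pf p j *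
      ((-(p * z)) ^ m / pf p m) := by
    intro m
    have h3 := (pf_pos hp0 hp1 m).ne'
    have h4 := (pf_pos hp0 hp1 j).ne'
    have h5 := (pf_pos hp0 hp1 (m + j)).ne'
    have h6 : (j + 1) * j / 2 = j * (j - 1) / 2 + j := tri_succ j
    have h7 : p ^ (j * (j + 1)) = p ^ (j * (j - 1) / 2) * p ^ (j * (j - 1) / 2) * p ^ j * p ^ j := by
      rw [← pow_add, ← pow_add, ← pow_add]
      congr 1
      have : j * (j + 1) = 2 * ((j + 1) * j / 2) := by
        rw [Nat.mul_div_cancel' (by simpa [mul_comm] using (Nat.even_mul_succ_self j).two_dvd), mul_comm]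
      omega
    simp only [hG]
    rw [prod_shift hp0 hp1, h6, h7, neg_pow z, neg_pow (p * z), mul_pow]
    have h8 : ((-1 : ℝ) ^ j) * (-1) ^ j = 1 := by rw [← mul_pow]; simp
    field_simp
    rw [pow_add (-1 : ℝ) m j]
    linear_combination (z ^ m * z ^ j * b * b ^ j * p ^ m * (p ^ j) ^ 2 * p ^ (j * (j - 1) / 2) *
      (-1) ^ m) * h8
  have hGs : Summable G := by
    rw [← summable_nat_add_iff j]
    simp only [e3]
    exact (summ_e hp0 hp1 _ hz').mul_left _
  rw [← hGs.sum_add_tsum_nat_add j, Finset.sum_eq_zero, zero_add]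
  · exact tsum_congr e3
  · intro i hi
    simp only [hG]
    rw [prod_zero j i (Finset.mem_range.1 hi)]
    simp

lemma qFact_eq (hp0 : 0 < p) (hp1 : p < 1) (n : ℕ) : qFact p n = pf p n / (1 - p) ^ n := by
  unfold qFact pf qNum
  rw [show (1 - p) ^ n = ∏ _i ∈ Finset.range n, (1 - p) by simp, ← Finset.prod_div_distrib]
  refine Finset.prod_congr rfl fun i _ => ?_
  rw [show ((i : ℝ) + 1) = ((i + 1 : ℕ) : ℝ) by push_cast; ring, Real.rpow_natCast,
    ← neg_div_neg_eq, neg_sub, neg_sub]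

lemma qExpE_eq (hp0 : 0 < p) (hp1 : p < 1) (u : ℝ) : qExpE p u = EE p (-((1 - p) * u)) := by
  unfold qExpE EE
  refine tsum_congr fun n => ?_
  have h : (1 - p) ≠ 0 := by linarith
  have h3 := (pf_pos hp0 hp1 n).ne'
  rw [qFact_eq hp0 hp1, neg_neg, mul_pow]
  field_simp

lemma qGamma_eq (hp0 : 0 < p) (hp1 : p < 1) (s : ℝ) (hs : 0 < s) :
    qGamma p s = (1 - p) ^ (1 - s) * (EE p p / EE p (p ^ s)) := by
  unfold qGamma
  rw [← gamma_prod hp0 hp1 (p ^ s) (Real.rpow_pos_of_pos hp0 s) (Real.rpow_lt_one hp0.le hp1 hs)]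
  congr 1
  refine tprod_congr fun k => ?_
  rw [Real.rpow_add hp0, Real.rpow_natCast, mul_comm (p ^ s)]

lemma bessel_eq (q : ℝ) (hq0 : 0 < q) (hq1 : q < 1) (ν : ℝ) (hν : ν > -1) (x z : ℝ) (k : ℕ)
    (hx : 0 < x) (h : (x * (1 - q)) ^ 2 = z * (q ^ 2) ^ k) :
    qBessel1 q ν x / x ^ ν = (1 + q) ^ (-ν) * (1 - q ^ 2) ^ ν *
      ∑' i : ℕ, Bc (q ^ 2) ((q ^ 2) ^ (ν + 1)) z i * (q ^ 2) ^ (k * i) := by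
  have hp0 : 0 < q ^ 2 := by positivity
  have hp1 : q ^ 2 < 1 := by nlinarith
  have hq2 : 0 < 1 + q := by linarith
  have hxn : 0 < x ^ ν := Real.rpow_pos_of_pos hx ν
  have h1p : 0 < 1 - q ^ 2 := by linarith
  unfold qBessel1
  rw [Real.div_rpow hx.le hq2.le, Real.rpow_neg hq2.le, ← tsum_mul_left, ← tsum_mul_left,
    ← tsum_div_const]
  refine tsum_congr fun i => ?_
  have hs : 0 < (i : ℝ) + ν + 1 := by
    have : (0 : ℝ) ≤ i := Nat.cast_nonneg i
    linarith
  have e1 : (q ^ 2) ^ ((i : ℝ) + ν + 1) = (q ^ 2) ^ (ν + 1) * (q ^ 2) ^ i := by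
    rw [add_assoc, Real.rpow_add hp0, Real.rpow_natCast, mul_comm]
  have e2 : (1 - q ^ 2) ^ (1 - ((i : ℝ) + ν + 1)) = ((1 - q ^ 2) ^ ν)⁻¹ * ((1 - q ^ 2) ^ i)⁻¹ := by
    rw [show 1 - ((i : ℝ) + ν + 1) = -ν + -(i : ℝ) by ring, Real.rpow_add h1p,
      Real.rpow_neg h1p.le, Real.rpow_neg h1p.le, Real.rpow_natCast]
  have hlt : (q ^ 2) ^ ((i : ℝ) + ν + 1) < 1 := Real.rpow_lt_one hp0.le hp1 hs
  have hgt : 0 < (q ^ 2) ^ ((i : ℝ) + ν + 1) := Real.rpow_pos_of_pos hp0 _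
  have hne := EE_ne hp0 hp1 _ (by rwa [abs_of_pos hgt])
  rw [qGamma_eq hp0 hp1 _ hs, qFact_eq hp0 hp1, e2]
  rw [e1] at hne ⊢
  have e3 : (x / (1 + q)) ^ (2 * i) * ((1 - q ^ 2) ^ i) ^ 2 = z ^ i * (q ^ 2) ^ (k * i) := by
    rw [pow_mul (q ^ 2), ← mul_pow, ← h, ← pow_mul, mul_comm i 2, ← mul_pow, ← pow_mul]
    congr 1
    rw [show 1 - q ^ 2 = (1 - q) * (1 + q) by ring]
    field_simp
  have h3 := (pf_pos hp0 hp1 i).ne'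
  have h4 := (EEp_pos hp0 hp1).ne'
  have h5 : 0 < (1 - q ^ 2) ^ ν := Real.rpow_pos_of_pos h1p ν
  have h6 : 0 < (1 + q) ^ ν := Real.rpow_pos_of_pos hq2 ν
  unfold Bc
  rw [neg_pow z, mul_assoc ((-1) ^ i) (z ^ i), mul_div_assoc, mul_div_assoc]
  generalize EE (q ^ 2) ((q ^ 2) ^ (ν + 1) * (q ^ 2) ^ i) = W at *
  generalize EE (q ^ 2) (q ^ 2) = V at *
  generalize (x / (1 + q)) ^ (2 * i) = X at *
  generalize (1 - q ^ 2) ^ ν = Y at *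
  generalize (1 + q) ^ ν = Z at *
  generalize (q ^ 2) ^ (k * i) = K at *
  generalize pf (q ^ 2) i = U at *
  have h7 : (1 - q ^ 2) ^ i ≠ 0 := by positivity
  generalize (1 - q ^ 2) ^ i = T at *
  field_simp
  linear_combination e3

lemma laguerre_eq (q : ℝ) (hq0 : 0 < q) (hq1 : q < 1) (ν : ℝ) (j : ℕ) (u : ℝ) (k : ℕ)
    (h : (1 - q ^ 2) * u = (q ^ 2) ^ k) :
    qLaguerre q ν j u =
      ∑ l ∈ Finset.range (j + 1), Ac (q ^ 2) ((q ^ 2) ^ (ν + 1)) j l * (q ^ 2) ^ (k * l) := by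
  have hp0 : 0 < q ^ 2 := by positivity
  have hp1 : q ^ 2 < 1 := by nlinarith
  have h1p : 0 < 1 - q ^ 2 := by linarith
  unfold qLaguerre Ac
  refine Finset.sum_congr rfl fun l _ => ?_
  have e1 : q ^ (2 * (l : ℝ) + 2 * ν + 2) = (q ^ 2) ^ (ν + 1) * (q ^ 2) ^ l := by
    rw [← Real.rpow_natCast (q ^ 2) l, ← Real.rpow_add hp0, ← Real.rpow_natCast q 2,
      ← Real.rpow_mul hq0.le]
    congr 1
    push_cast
    ring
  have e2 : q ^ ((j - l) * (j - l + 1)) = (q ^ 2) ^ ((j - l + 1) * (j - l) / 2) := by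
    rw [← pow_mul, Nat.mul_div_cancel'
      (by simpa [mul_comm] using (Nat.even_mul_succ_self (j - l)).two_dvd), mul_comm]
  have h3 := (pf_pos hp0 hp1 l).ne'
  have h4 := (pf_pos hp0 hp1 (j - l)).ne'
  rw [e1, e2, qFact_eq hp0 hp1, qFact_eq hp0 hp1, pow_mul (q ^ 2) k l, ← h, mul_pow, neg_pow u]
  field_simp

end QH

theorem hankel1_qLaguerre (q : ℝ) (hq0 : 0 < q) (hq1 : q < 1)
    (ν : ℝ) (hν : ν > -1) (j : ℕ) (t : ℝ) (ht0 : 0 < t)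
    (ht1 : t < 1 / Real.sqrt (1 - q)) :
    jackson q (1 / Real.sqrt (1 - q))
      (fun r => qBessel1 q ν (r * t) / (r * t) ^ ν * r ^ (2 * ν + 1) *
        (qLaguerre q ν j (r ^ 2 / (1 + q)) * qExpE (q ^ 2) (-(r ^ 2 / (1 + q))))) =
      q ^ (2 * ((j : ℝ) + 1) * ((j : ℝ) + ν + 1)) / qFact (q ^ 2) j *
        (t ^ (2 * j) / (1 + q) ^ j) * qExpe (q ^ 2) (q ^ 2 * t ^ 2 / (1 + q)) := by
  have hp0 : 0 < q ^ 2 := by positivity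
  have hp1 : q ^ 2 < 1 := by nlinarith
  have h1q : 0 < 1 - q := by linarith
  have hq2 : 0 < 1 + q := by linarith
  have h1p : 0 < 1 - q ^ 2 := by linarith
  have hsq : 0 < Real.sqrt (1 - q) := Real.sqrt_pos.2 h1q
  have hss : Real.sqrt (1 - q) ^ 2 = 1 - q := Real.sq_sqrt h1q.le
  set a : ℝ := 1 / Real.sqrt (1 - q) with ha
  have ha0 : 0 < a := by positivity
  have ha2 : (1 - q) * a ^ 2 = 1 := by
    rw [ha, div_pow, hss]
    field_simp
  set z : ℝ := (1 - q) * t ^ 2 with hz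
  have hz0 : 0 < z := by positivity
  have hz1 : z < 1 := by
    rw [← ha2, hz]
    gcongr
  set b : ℝ := (q ^ 2) ^ (ν + 1) with hb
  have hb0 : 0 < b := Real.rpow_pos_of_pos hp0 _
  have hb1 : b < 1 := Real.rpow_lt_one hp0.le hp1 (by linarith)
  have hpre : (1 - q) * a * ((1 + q) ^ (-ν) * (1 - q ^ 2) ^ ν * a ^ (2 * ν + 1)) = 1 := by
    have e1 : a ^ (2 * ν + 1) = ((1 - q) ^ ν)⁻¹ * a := by
      rw [Real.rpow_add ha0, Real.rpow_one, Real.rpow_mul ha0.le,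
        show a ^ (2 : ℝ) = (1 - q)⁻¹ by
          rw [Real.rpow_two]; exact eq_inv_of_mul_eq_one_right ha2,
        Real.inv_rpow h1q.le]
    rw [e1, show 1 - q ^ 2 = (1 - q) * (1 + q) by ring, Real.mul_rpow h1q.le hq2.le,
      Real.rpow_neg hq2.le]
    have h5 := (Real.rpow_pos_of_pos h1q ν).ne'
    have h6 := (Real.rpow_pos_of_pos hq2 ν).ne'
    field_simp
    linarith
  have hterm : ∀ k : ℕ, (1 - q) * a * ((qBessel1 q ν (q ^ k * a * t) / (q ^ k * a * t) ^ ν *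
      (q ^ k * a) ^ (2 * ν + 1) * (qLaguerre q ν j ((q ^ k * a) ^ 2 / (1 + q)) *
        qExpE (q ^ 2) (-((q ^ k * a) ^ 2 / (1 + q))))) * q ^ k) =
      (∑' i : ℕ, QH.Bc (q ^ 2) b z i * (q ^ 2) ^ (k * i)) *
        (b ^ k * (∑ l ∈ Finset.range (j + 1), QH.Ac (q ^ 2) b j l * (q ^ 2) ^ (k * l)) *
          QH.EE (q ^ 2) ((q ^ 2) ^ k)) := by
    intro k
    have hqk : 0 < q ^ k := by positivity
    have hu : (1 - q ^ 2) * ((q ^ k * a) ^ 2 / (1 + q)) = (q ^ 2) ^ k := by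
      rw [show 1 - q ^ 2 = (1 - q) * (1 + q) by ring]
      field_simp
      linear_combination ((q ^ 2) ^ k) * ha2
    have hxz : (q ^ k * a * t * (1 - q)) ^ 2 = z * (q ^ 2) ^ k := by
      rw [hz]
      linear_combination ((q ^ 2) ^ k * t ^ 2 * (1 - q)) * ha2
    rw [QH.bessel_eq q hq0 hq1 ν hν _ z k (by positivity) hxz,
      QH.laguerre_eq q hq0 hq1 ν j _ k hu, QH.qExpE_eq hp0 hp1, mul_neg, neg_neg, hu,
      Real.mul_rpow hqk.le ha0.le]
    have e5 : (q ^ k) ^ (2 * ν + 1) * q ^ k = b ^ k := by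
      rw [hb]
      simp only [← Real.rpow_natCast, ← Real.rpow_mul hq0.le]
      rw [← Real.rpow_add hq0]
      congr 1
      push_cast
      ring
    rw [← hb, ← e5]
    linear_combination ((∑' i : ℕ, QH.Bc (q ^ 2) b z i * (q ^ 2) ^ (k * i)) *
        (((q ^ k) ^ (2 * ν + 1) * q ^ k) * (∑ l ∈ Finset.range (j + 1), QH.Ac (q ^ 2) b j l * (q ^ 2) ^ (k * l)) *
          QH.EE (q ^ 2) ((q ^ 2) ^ k))) * hpre
  unfold jackson
  rw [← tsum_mul_left]
  simp only [hterm]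
  rw [QH.main_sum hp0 hp1 b z hb0 hb1 hz0 hz1 j, qExpe, QH.qExpE_eq hp0 hp1, QH.qFact_eq hp0 hp1]
  have f1 : (1 - q ^ 2) * (q ^ 2 * t ^ 2 / (1 + q)) = q ^ 2 * z := by
    rw [hz]
    field_simp
    ring
  have f2 : q ^ (2 * ((j : ℝ) + 1) * ((j : ℝ) + ν + 1)) = b ^ (j + 1) * (q ^ 2) ^ (j * (j + 1)) := by
    rw [hb]
    simp only [← Real.rpow_natCast, ← Real.rpow_mul hq0.le]
    rw [← Real.rpow_add hq0]
    congr 1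
    push_cast
    ring
  have f3 : (1 - q ^ 2) ^ j * (t ^ (2 * j) / (1 + q) ^ j) = z ^ j := by
    rw [pow_mul, ← div_pow, ← mul_pow, hz]
    congr 1
    field_simp
    ring
  rw [f1, f2, ← f3]
  have h3 := (QH.pf_pos hp0 hp1 j).ne'
  field_simp
end
end

section
/- Second q-Hankel image of a q-Laguerre function: for every real ν > −1, every j ∈ ℕ, every γ > 0 and every real r > 0, the bilateral series defining the infinite Jackson integral below converges absolutely and ∫_0^{γ·∞} d_q t · ( J^{(2)}_ν(qrt|q²)/(rt)^ν ) · t^{2ν+1} · 𝓛^{(ν)}_j(q²t²/(1+q)|q^{−2}) · e_{q²}(−q²t²/(1+q)) = d · ( q^{−(j+1)(j+2ν+2)} / [j]_{q²}! ) · ( r^{2j}/(1+q)^j ) · E_{q²}(−r²/(1+q)), where d = ( q^{(ν+1)(ν+2)} / ((1+q)^ν Γ_{q²}(ν+1)) ) · ∫_0^{γ·∞} d_q t · t^{2ν+1} e_{q²}(−q²t²/(1+q)). -/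
open scoped BigOperators

noncomputable section

lemma qNum_nat {p : ℝ} (hp0 : 0 < p) (hp1 : p < 1) (i : ℕ) :
    qNum p ((i : ℝ) + 1) = (1 - p ^ (i + 1)) / (1 - p) := by
  unfold qNum
  have : p ^ ((i : ℝ) + 1) = p ^ (i + 1) := by
    rw [← Real.rpow_natCast]; push_cast; rfl
  rw [this, ← neg_div_neg_eq]; congr 1 <;> ring

lemma qFact_zero (p : ℝ) : qFact p 0 = 1 := by simp [qFact]

lemma qFact_succ {p : ℝ} (hp0 : 0 < p) (hp1 : p < 1) (i : ℕ) :
    qFact p (i + 1) = qFact p i * ((1 - p ^ (i + 1)) / (1 - p)) := by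
  rw [qFact, Finset.prod_range_succ, qNum_nat hp0 hp1]; rfl

lemma qNum_ge_one {p : ℝ} (hp0 : 0 < p) (hp1 : p < 1) (i : ℕ) :
    1 ≤ (1 - p ^ (i + 1)) / (1 - p) := by
  rw [le_div_iff₀ (by linarith), one_mul]
  have : p ^ (i + 1) ≤ p ^ 1 := pow_le_pow_of_le_one hp0.le hp1.le (by omega)
  simp at this; linarith

lemma qFact_ge_one {p : ℝ} (hp0 : 0 < p) (hp1 : p < 1) (i : ℕ) : 1 ≤ qFact p i := by
  induction i with
  | zero => simp [qFact_zero]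
  | succ n ih =>
    rw [qFact_succ hp0 hp1]
    exact one_le_mul_of_one_le_of_one_le ih (qNum_ge_one hp0 hp1 n)

lemma qFact_pos {p : ℝ} (hp0 : 0 < p) (hp1 : p < 1) (i : ℕ) : 0 < qFact p i :=
  lt_of_lt_of_le one_pos (qFact_ge_one hp0 hp1 i)

/-- the triangular power -/
def triP (p : ℝ) (i : ℕ) : ℝ := p ^ (i * (i - 1) / 2)

lemma triP_zero (p : ℝ) : triP p 0 = 1 := by simp [triP]
lemma triP_succ (p : ℝ) (i : ℕ) : triP p (i + 1) = triP p i * p ^ i := by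
  rw [triP, Nat.triangle_succ, pow_add]; rfl
lemma triP_pos {p : ℝ} (hp0 : 0 < p) (i : ℕ) : 0 < triP p i := pow_pos hp0 _
lemma triP_add (p : ℝ) (i l : ℕ) : triP p (i + l) = triP p i * triP p l * p ^ (i * l) := by
  induction l with
  | zero => simp [triP_zero]
  | succ n ih => rw [← add_assoc, triP_succ, ih, triP_succ]; ring
lemma triP_sq (p : ℝ) (i : ℕ) : triP p i ^ 2 * p ^ i = p ^ (i * i) := by
  induction i with
  | zero => simp [triP_zero]
  | succ n ih =>
    have : (n + 1) * (n + 1) = n * n + (n + (n + 1)) := by ring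
    rw [triP_succ, this, pow_add p (n * n), ← ih]; ring

/-- coefficients of `qExpE` -/
def cE (p : ℝ) (i : ℕ) : ℝ := triP p i / qFact p i

lemma cE_pos {p : ℝ} (hp0 : 0 < p) (hp1 : p < 1) (i : ℕ) : 0 < cE p i :=
  div_pos (triP_pos hp0 i) (qFact_pos hp0 hp1 i)

lemma cE_succ {p : ℝ} (hp0 : 0 < p) (hp1 : p < 1) (i : ℕ) :
    cE p (i + 1) * (1 - p ^ (i + 1)) = cE p i * p ^ i * (1 - p) := by
  have h1 := (qFact_pos hp0 hp1 i).ne'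
  have h2 : 1 - p ^ (i + 1) ≠ 0 := by
    have : p ^ (i + 1) < 1 := pow_lt_one₀ hp0.le hp1 (by omega)
    linarith
  have h3 : 1 - p ≠ 0 := by linarith
  rw [cE, cE, triP_succ, qFact_succ hp0 hp1]
  field_simp

lemma cE_summable {p : ℝ} (hp0 : 0 < p) (hp1 : p < 1) (t : ℝ) :
    Summable (fun i => cE p i * t ^ i) := by
  have hlim : Filter.Tendsto (fun n : ℕ => p ^ n * |t|) Filter.atTop (nhds 0) := by
    simpa using (tendsto_pow_atTop_nhds_zero_of_lt_one hp0.le hp1).mul_const |t|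
  refine summable_of_ratio_norm_eventually_le (r := 1 / 2) (by norm_num) ?_
  filter_upwards [hlim.eventually_le_const (show (0 : ℝ) < 1 / 2 by norm_num)] with n hn
  have h1 := qFact_pos hp0 hp1 n
  have h2 := qNum_ge_one hp0 hp1 n
  have hc := cE_pos hp0 hp1 n
  have hle : cE p (n + 1) ≤ cE p n * p ^ n := by
    rw [cE, cE, triP_succ, qFact_succ hp0 hp1, div_mul_eq_mul_div]
    apply div_le_div_of_nonneg_left _ h1
    · exact le_mul_of_one_le_right h1.le h2
    · exact (mul_pos (triP_pos hp0 n) (pow_pos hp0 n)).le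
  rw [norm_mul, norm_mul, norm_pow, norm_pow, Real.norm_eq_abs, Real.norm_eq_abs, Real.norm_eq_abs,
    abs_of_pos hc, abs_of_pos (cE_pos hp0 hp1 _)]
  calc cE p (n + 1) * |t| ^ (n + 1) ≤ cE p n * p ^ n * |t| ^ (n + 1) := by gcongr
    _ = (p ^ n * |t|) * (cE p n * |t| ^ n) := by ring
    _ ≤ _ := by gcongr

lemma qExpE_hasSum {p : ℝ} (hp0 : 0 < p) (hp1 : p < 1) (t : ℝ) :
    HasSum (fun i => cE p i * t ^ i) (qExpE p t) := by
  have h := (cE_summable hp0 hp1 t).hasSum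
  convert h using 1
  unfold qExpE cE triP
  congr 1; ext j; ring

lemma qExpE_ge {p : ℝ} (hp0 : 0 < p) (hp1 : p < 1) {t : ℝ} (ht : 0 ≤ t) (n : ℕ) :
    cE p n * t ^ n ≤ qExpE p t :=
  le_hasSum (qExpE_hasSum hp0 hp1 t) n fun i _ =>
    mul_nonneg (cE_pos hp0 hp1 i).le (pow_nonneg ht _)

lemma qExpE_ge_one {p : ℝ} (hp0 : 0 < p) (hp1 : p < 1) {t : ℝ} (ht : 0 ≤ t) :
    1 ≤ qExpE p t := by
  simpa [cE, triP_zero, qFact_zero] using qExpE_ge hp0 hp1 ht 0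

lemma qExpE_shift {p : ℝ} (hp0 : 0 < p) (hp1 : p < 1) (t : ℝ) :
    qExpE p t = (1 + (1 - p) * t) * qExpE p (p * t) := by
  have h1 := (qExpE_hasSum hp0 hp1 t).sub (qExpE_hasSum hp0 hp1 (p * t))
  rw [← hasSum_nat_add_iff' 1] at h1
  have h2 := (qExpE_hasSum hp0 hp1 (p * t)).mul_left ((1 - p) * t)
  have h3 : (fun n => cE p (n + 1) * t ^ (n + 1) - cE p (n + 1) * (p * t) ^ (n + 1))
      = fun i => (1 - p) * t * (cE p i * (p * t) ^ i) := by
    ext i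
    have := cE_succ hp0 hp1 i
    rw [mul_pow, mul_pow]
    linear_combination t ^ (i + 1) * this
  rw [h3] at h1
  have := h1.unique h2
  simp at this
  linarith

lemma qGamma_succ {p : ℝ} (hp0 : 0 < p) (hp1 : p < 1) {t : ℝ} (ht : 0 < t) :
    qGamma p (t + 1) = qGamma p t * ((1 - p ^ t) / (1 - p)) := by
  have hlt : ∀ (k : ℕ) (u : ℝ), 0 < u → p ^ ((k : ℝ) + u) < 1 := fun k u hu =>
    Real.rpow_lt_one hp0.le hp1 (by positivity)
  have hmul : ∀ u : ℝ, 0 < u → Multipliable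
      (fun k : ℕ => (1 - p ^ (k + 1)) / (1 - p ^ ((k : ℝ) + u))) := by
    intro u hu
    have hpu : p ^ u < 1 := Real.rpow_lt_one hp0.le hp1 hu
    have hs : Summable (fun k : ℕ => (p ^ ((k : ℝ) + u) - p ^ (k + 1)) / (1 - p ^ ((k : ℝ) + u))) := by
      refine Summable.of_norm_bounded (g := fun k : ℕ => (2 / (1 - p ^ u)) * p ^ k)
        ((summable_geometric_of_lt_one hp0.le hp1).mul_left _) ?_
      intro k
      have e : p ^ ((k : ℝ) + u) = p ^ k * p ^ u := by
        rw [Real.rpow_add hp0, Real.rpow_natCast]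
      have hk1 : p ^ k ≤ 1 := pow_le_one₀ hp0.le hp1.le
      have hk0 : 0 < p ^ k := pow_pos hp0 k
      have hu0 : 0 < p ^ u := Real.rpow_pos_of_pos hp0 u
      rw [e, pow_succ, norm_div, Real.norm_eq_abs, Real.norm_eq_abs]
      have hd : 1 - p ^ u ≤ 1 - p ^ k * p ^ u := by nlinarith
      rw [abs_of_pos (a := 1 - p ^ k * p ^ u) (by linarith)]
      have hn : |p ^ k * p ^ u - p ^ k * p| ≤ 2 * p ^ k := by
        rw [abs_le]; constructor <;> nlinarith
      calc _ ≤ (2 * p ^ k) / (1 - p ^ u) := div_le_div₀ (by positivity) hn (by linarith) hd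
        _ = _ := by ring
    have := Real.multipliable_one_add_of_summable hs
    convert this using 2 with k
    have := hlt k u hu
    have h : 1 - p ^ ((k : ℝ) + u) ≠ 0 := by linarith
    field_simp; ring
  have l1 := (hmul t ht).hasProd.tendsto_prod_nat
  have l2 := (hmul (t + 1) (by linarith)).hasProd.tendsto_prod_nat
  have part : ∀ n : ℕ, ∏ k ∈ Finset.range n, ((1 - p ^ (k + 1)) / (1 - p ^ ((k : ℝ) + (t + 1))))
      = (∏ k ∈ Finset.range n, ((1 - p ^ (k + 1)) / (1 - p ^ ((k : ℝ) + t)))) *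
        ((1 - p ^ t) / (1 - p ^ ((n : ℝ) + t))) := by
    intro n
    induction n with
    | zero =>
      have := hlt 0 t ht
      have h : 1 - p ^ t ≠ 0 := by simp at this; linarith
      simp [h]
    | succ n ih =>
      rw [Finset.prod_range_succ, Finset.prod_range_succ, ih]
      have h1 := hlt n t ht
      have h2 := hlt (n + 1) t ht
      have e : (n : ℝ) + (t + 1) = ((n + 1 : ℕ) : ℝ) + t := by push_cast; ring
      rw [e]
      have h1' : 1 - p ^ ((n : ℝ) + t) ≠ 0 := by linarith
      have h2' : 1 - p ^ (((n + 1 : ℕ) : ℝ) + t) ≠ 0 := by linarith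
      field_simp
  have l3 : Filter.Tendsto (fun n : ℕ => (1 - p ^ t) / (1 - p ^ ((n : ℝ) + t))) Filter.atTop
      (nhds (1 - p ^ t)) := by
    have e : ∀ n : ℕ, p ^ ((n : ℝ) + t) = p ^ n * p ^ t := fun n => by
      rw [Real.rpow_add hp0, Real.rpow_natCast]
    simp_rw [e]
    have := (tendsto_pow_atTop_nhds_zero_of_lt_one hp0.le hp1).mul_const (p ^ t)
    have h5 : Filter.Tendsto (fun n : ℕ => (1 - p ^ t) / (1 - p ^ n * p ^ t)) Filter.atTop
        (nhds ((1 - p ^ t) / (1 - 0 * p ^ t))) :=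
      (tendsto_const_nhds (x := 1 - p ^ t)).div
        ((tendsto_const_nhds (x := (1 : ℝ))).sub this) (by simp)
    simpa using h5
  have l4 := l1.mul l3
  simp_rw [part] at l2
  have := tendsto_nhds_unique l2 l4
  unfold qGamma
  rw [this]
  have h1p : 0 < 1 - p := by linarith
  have : (1 - p) ^ (1 - t) = (1 - p) ^ (1 - (t + 1)) * (1 - p) := by
    rw [← Real.rpow_add_one h1p.ne']; congr 1; ring
  rw [this]
  field_simp

lemma qPoch_succ (a p : ℝ) (n : ℕ) : qPoch a p (n + 1) = qPoch a p n * (1 - a * p ^ n) := by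
  rw [qPoch, Finset.prod_range_succ]; rfl

lemma qPoch_zero (a p : ℝ) : qPoch a p 0 = 1 := by simp [qPoch]

lemma qPoch_succ' (a p : ℝ) (n : ℕ) : qPoch a p (n + 1) = (1 - a) * qPoch (a * p) p n := by
  rw [qPoch, Finset.prod_range_succ', mul_comm, qPoch]
  simp only [pow_zero, mul_one]
  congr 1
  refine Finset.prod_congr rfl fun i _ => ?_
  ring

lemma qPoch_add (a p : ℝ) (m n : ℕ) : qPoch a p (m + n) = qPoch a p m * qPoch (a * p ^ m) p n := by
  rw [qPoch, Finset.prod_range_add, qPoch, qPoch]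
  congr 1
  refine Finset.prod_congr rfl fun i _ => ?_
  ring

lemma qPoch_pos {x p : ℝ} (hp0 : 0 < p) (hp1 : p < 1) (hx1 : x < 1) (hx0 : 0 < x) (n : ℕ) :
    0 < qPoch x p n := by
  refine Finset.prod_pos fun l _ => ?_
  have : p ^ l ≤ 1 := pow_le_one₀ hp0.le hp1.le
  nlinarith [pow_pos hp0 l]

lemma qPoch_le_one {x p : ℝ} (hp0 : 0 < p) (hp1 : p < 1) (hx1 : x < 1) (hx0 : 0 < x) (n : ℕ) :
    qPoch x p n ≤ 1 := by
  refine Finset.prod_le_one (fun l _ => ?_) (fun l _ => ?_)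
  · have : p ^ l ≤ 1 := pow_le_one₀ hp0.le hp1.le
    nlinarith [pow_pos hp0 l]
  · have := mul_pos hx0 (pow_pos hp0 l)
    linarith

lemma qGamma_add {p : ℝ} (hp0 : 0 < p) (hp1 : p < 1) {ν : ℝ} (hν : ν > -1) (i : ℕ) :
    qGamma p ((i : ℝ) + ν + 1) = qGamma p (ν + 1) * (qPoch (p ^ (ν + 1)) p i / (1 - p) ^ i) := by
  induction i with
  | zero => simp [qPoch_zero]
  | succ n ih =>
    have : ((n + 1 : ℕ) : ℝ) + ν + 1 = ((n : ℝ) + ν + 1) + 1 := by push_cast; ring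
    rw [this, qGamma_succ hp0 hp1 (by have : (0 : ℝ) ≤ n := by positivity
                                      linarith), ih, qPoch_succ]
    have : p ^ ((n : ℝ) + ν + 1) = p ^ (ν + 1) * p ^ n := by
      rw [mul_comm, ← Real.rpow_natCast p n, ← Real.rpow_add hp0]; congr 1; ring
    rw [this]
    have h3 : 1 - p ≠ 0 := by linarith
    field_simp
    ring

/-- q-Chu-Vandermonde sum -/
def cvSum (p : ℝ) (j : ℕ) (x z : ℝ) : ℝ :=
  ∑ k ∈ Finset.range (j + 1), 1 / (qFact p (j - k) * qFact p k) *
    qPoch (x * p ^ k) p (j - k) * ∏ l ∈ Finset.range k, (x * p ^ (2 * l) - z * p ^ l)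

lemma cvSum_succ {p : ℝ} (hp0 : 0 < p) (hp1 : p < 1) (j : ℕ) (x z : ℝ) :
    (1 - p ^ (j + 1)) / (1 - p) * cvSum p (j + 1) x z =
      (1 - x * p ^ j) * cvSum p j x z + (x - z) * p ^ j * cvSum p j (p * x) z := by
  have h3 : 1 - p ≠ 0 := by linarith
  set W : ℕ → ℝ := fun k => ∏ l ∈ Finset.range k, (x * p ^ (2 * l) - z * p ^ l) with hW
  have hWs : ∀ k, (x - z) * p ^ k * (∏ l ∈ Finset.range k, (p * x * p ^ (2 * l) - z * p ^ l)) =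
      W (k + 1) := by
    intro k
    simp only [hW]
    rw [Finset.prod_range_succ', mul_comm (∏ l ∈ Finset.range k, _), mul_assoc]
    simp only [mul_zero, pow_zero, mul_one]
    congr 1
    rw [← Finset.card_range k, ← Finset.prod_const, Finset.card_range, ← Finset.prod_mul_distrib]
    refine Finset.prod_congr rfl fun i _ => ?_
    ring
  -- split of the terms
  have key : ∀ k ∈ Finset.range (j + 2), (1 - p ^ (j + 1)) / (1 - p) *
      (1 / (qFact p (j + 1 - k) * qFact p k) * qPoch (x * p ^ k) p (j + 1 - k) * W k) =
      (1 - p ^ (j + 1 - k)) / (1 - p) *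
      (1 / (qFact p (j + 1 - k) * qFact p k) * qPoch (x * p ^ k) p (j + 1 - k) * W k) +
      p ^ (j + 1 - k) * (1 - p ^ k) / (1 - p) *
      (1 / (qFact p (j + 1 - k) * qFact p k) * qPoch (x * p ^ k) p (j + 1 - k) * W k) := by
    intro k hk
    have : k ≤ j + 1 := by simp at hk; omega
    have : p ^ (j + 1) = p ^ (j + 1 - k) * p ^ k := by rw [← pow_add]; congr 1; omega
    rw [this]; field_simp; ring
  rw [cvSum, Finset.mul_sum, Finset.sum_congr rfl key, Finset.sum_add_distrib]
  congr 1
  · rw [Finset.sum_range_succ, cvSum, Finset.mul_sum]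
    simp only [Nat.sub_self, pow_zero, sub_self, zero_div, zero_mul, add_zero]
    refine Finset.sum_congr rfl fun k hk => ?_
    have hk' : k ≤ j := by simp at hk; omega
    have e : j + 1 - k = (j - k) + 1 := by omega
    rw [e, qFact_succ hp0 hp1, qPoch_succ]
    have : x * p ^ k * p ^ (j - k) = x * p ^ j := by
      rw [mul_assoc, ← pow_add]; congr 2; omega
    rw [this]
    have h1 := (qFact_pos hp0 hp1 (j - k)).ne'
    have h1' := (qFact_pos hp0 hp1 k).ne'
    have h2 : 1 - p ^ (j - k + 1) ≠ 0 := by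
      have : p ^ (j - k + 1) < 1 := pow_lt_one₀ hp0.le hp1 (by omega)
      linarith
    field_simp
    rfl
  · rw [Finset.sum_range_succ', cvSum, Finset.mul_sum]
    simp only [pow_zero, sub_self, mul_zero, zero_div, zero_mul, add_zero]
    refine Finset.sum_congr rfl fun k hk => ?_
    have hk' : k ≤ j := by simp at hk; omega
    have e : j + 1 - (k + 1) = (j - k) := by omega
    rw [e, qFact_succ hp0 hp1, ← hWs]
    have : p ^ j = p ^ (j - k) * p ^ k := by rw [← pow_add]; congr 1; omega
    rw [this]
    have e2 : x * p ^ (k + 1) = p * x * p ^ k := by ring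
    rw [e2]
    have h1 := (qFact_pos hp0 hp1 (j - k)).ne'
    have h1' := (qFact_pos hp0 hp1 k).ne'
    have h2 : 1 - p ^ (k + 1) ≠ 0 := by
      have : p ^ (k + 1) < 1 := pow_lt_one₀ hp0.le hp1 (by omega)
      linarith
    field_simp

lemma cvSum_eq {p : ℝ} (hp0 : 0 < p) (hp1 : p < 1) (j : ℕ) (x z : ℝ) :
    qFact p j * cvSum p j x z = qPoch z p j := by
  induction j generalizing x with
  | zero => simp [cvSum, qFact_zero, qPoch_zero]
  | succ n ih =>
    rw [qFact_succ hp0 hp1, mul_assoc, cvSum_succ hp0 hp1, qPoch_succ]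
    have h1 := ih x
    have h2 := ih (p * x)
    linear_combination (1 - x * p ^ n) * h1 + (x - z) * p ^ n * h2

lemma moment_summable {p x : ℝ} (hp0 : 0 < p) (hp1 : p < 1) (hx0 : 0 < x) (hx1 : x < 1)
    {s w : ℤ → ℝ} (hs : ∀ k, 0 < s k) (hw : ∀ k, 0 < w k) (hss : ∀ k, s (k + 1) = p * s k)
    (hws : ∀ k, w (k + 1) = x * w k * (1 + (1 - p) * s k)) (m : ℕ) :
    Summable (fun k => s k ^ m * w k) := by
  have hp : 0 < 1 - p := by linarith
  have hpos : ∀ k, 0 < s k ^ m * w k := fun k => mul_pos (pow_pos (hs k) m) (hw k)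
  have hstep : ∀ k, s (k + 1) ^ m * w (k + 1) =
      (p ^ m * x * (1 + (1 - p) * s k)) * (s k ^ m * w k) := by
    intro k; rw [hss, hws]; ring
  have hsn : ∀ n : ℕ, s n = p ^ n * s 0 := by
    intro n
    induction n with
    | zero => simp
    | succ n ih => push_cast; rw [hss, ih]; ring
  have hsm : ∀ n : ℕ, s (-(n : ℤ)) * p ^ n = s 0 := by
    intro n
    induction n with
    | zero => simp
    | succ n ih =>
      rw [← ih]
      have := hss (-((n + 1 : ℕ) : ℤ))
      have e : -((n + 1 : ℕ) : ℤ) + 1 = -(n : ℤ) := by push_cast; ring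
      rw [e] at this
      rw [this]; ring
  apply Summable.of_nat_of_neg
  · have hlim : Filter.Tendsto (fun n : ℕ => p ^ m * x * (1 + (1 - p) * (p ^ n * s 0)))
        Filter.atTop (nhds (p ^ m * x * (1 + (1 - p) * (0 * s 0)))) :=
      ((((tendsto_pow_atTop_nhds_zero_of_lt_one hp0.le hp1).mul_const (s 0)).const_mul
        (1 - p)).const_add 1).const_mul _
    have hlt : p ^ m * x < 1 := by
      have : p ^ m ≤ 1 := pow_le_one₀ hp0.le hp1.le
      nlinarith [pow_pos hp0 m]
    obtain ⟨ρ, h1, h2⟩ := exists_between hlt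
    refine summable_of_ratio_norm_eventually_le (r := ρ) h2 ?_
    filter_upwards [hlim.eventually_le_const (u := ρ) (by simpa using h1)] with n hn
    rw [Real.norm_eq_abs, Real.norm_eq_abs, abs_of_pos (hpos _), abs_of_pos (hpos _)]
    push_cast
    rw [hstep, hsn]
    rw [← hsn]
    rw [← hsn] at hn
    exact mul_le_mul_of_nonneg_right hn (hpos _).le
  · have hlim : Filter.Tendsto (fun n : ℕ => p ^ n) Filter.atTop (nhds 0) :=
      (tendsto_pow_atTop_nhds_zero_of_lt_one hp0.le hp1)
    refine summable_of_ratio_norm_eventually_le (r := 1 / 2) (by norm_num) ?_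
    have hc : 0 < p ^ m * x * (1 - p) * s 0 / 2 := by
      have := hs 0; positivity
    filter_upwards [hlim.eventually_le_const hc] with n hn
    rw [Real.norm_eq_abs, Real.norm_eq_abs, abs_of_pos (hpos _), abs_of_pos (hpos _)]
    have e : -((n + 1 : ℕ) : ℤ) + 1 = -(n : ℤ) := by push_cast; ring
    have h1 := hstep (-((n + 1 : ℕ) : ℤ))
    have h2 := hsm (n + 1)
    rw [e] at h1
    rw [h1]
    set S := s (-((n + 1 : ℕ) : ℤ)) with hS
    have hSp : 0 < S := hs _
    have h3 : p ^ n ≤ (p ^ m * x * (1 - p) * S / 2) * p ^ n := by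
      calc p ^ n ≤ p ^ m * x * (1 - p) * s 0 / 2 := hn
        _ = (p ^ m * x * (1 - p) * S / 2) * p ^ n * p := by rw [← h2]; ring
        _ ≤ _ := by
          apply mul_le_of_le_one_right _ hp1.le
          positivity
    have h4 : 1 ≤ p ^ m * x * (1 - p) * S / 2 := by
      have := pow_pos hp0 n
      by_contra hcon
      push Not at hcon
      nlinarith
    have h5 : 0 < p ^ m * x := by positivity
    have h6 : 2 ≤ p ^ m * x * (1 + (1 - p) * S) := by nlinarith
    nlinarith [hpos (-((n + 1 : ℕ) : ℤ))]

lemma moment_rec {p x : ℝ} (hp0 : 0 < p) (hp1 : p < 1) (hx0 : 0 < x) (hx1 : x < 1)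
    {s w : ℤ → ℝ} (hs : ∀ k, 0 < s k) (hw : ∀ k, 0 < w k) (hss : ∀ k, s (k + 1) = p * s k)
    (hws : ∀ k, w (k + 1) = x * w k * (1 + (1 - p) * s k)) (m : ℕ) :
    (∑' k, s k ^ m * w k) * (x ^ m * triP p m * (1 - p) ^ m) = (∑' k, w k) * qPoch x p m := by
  have hsum := moment_summable hp0 hp1 hx0 hx1 hs hw hss hws
  induction m with
  | zero => simp [triP_zero, qPoch_zero]
  | succ m ih =>
    have h1 : ∑' k, s k ^ m * w k = x * p ^ m * ((∑' k, s k ^ m * w k) +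
        (1 - p) * ∑' k, s k ^ (m + 1) * w k) := by
      conv_lhs => rw [← (Equiv.addRight (1 : ℤ)).tsum_eq]
      rw [← tsum_mul_left (a := 1 - p), ← (hsum m).tsum_add ((hsum (m + 1)).mul_left _),
        ← tsum_mul_left]
      congr 1; ext k
      simp only [Equiv.coe_addRight]
      rw [hss, hws]; ring
    rw [triP_succ, qPoch_succ]
    linear_combination (1 - x * p ^ m) * ih - (x ^ m * triP p m * (1 - p) ^ m) * h1

lemma cE_qPoch {p : ℝ} (hp0 : 0 < p) (hp1 : p < 1) (j n : ℕ) :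
    cE p (n + j) * qPoch ((p ^ (n + j))⁻¹) p j = (-1) ^ j * (1 - p) ^ j * (p ^ j)⁻¹ * cE p n := by
  induction j with
  | zero => simp [qPoch_zero]
  | succ j ih =>
    rw [← add_assoc, qPoch_succ']
    have e : (p ^ (n + j + 1))⁻¹ * p = (p ^ (n + j))⁻¹ := by
      rw [pow_succ]; field_simp
    rw [e]
    have h := cE_succ hp0 hp1 (n + j)
    have h2 : cE p (n + j + 1) * (1 - (p ^ (n + j + 1))⁻¹) = - p⁻¹ * (1 - p) * cE p (n + j) := by
      have : cE p (n + j + 1) * (1 - (p ^ (n + j + 1))⁻¹) =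
        -(p ^ (n + j + 1))⁻¹ * (cE p (n + j + 1) * (1 - p ^ (n + j + 1))) := by
        field_simp; ring
      rw [this, h, pow_succ]; field_simp
    rw [← mul_assoc, h2, mul_assoc, ih, pow_succ, pow_succ, pow_succ]
    field_simp

lemma qPoch_vanish {p : ℝ} (hp0 : 0 < p) {i j : ℕ} (h : i < j) : qPoch ((p ^ i)⁻¹) p j = 0 := by
  apply Finset.prod_eq_zero (Finset.mem_range.mpr h)
  have := (pow_pos hp0 i).ne'
  field_simp; simp

lemma final_sum {p : ℝ} (hp0 : 0 < p) (hp1 : p < 1) (j : ℕ) (R : ℝ) :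
    HasSum (fun i => cE p i * (-R) ^ i * qPoch ((p ^ i)⁻¹) p j)
      ((1 - p) ^ j * (p ^ j)⁻¹ * R ^ j * qExpE p (-R)) := by
  rw [← hasSum_nat_add_iff' j]
  have : ∑ i ∈ Finset.range j, cE p i * (-R) ^ i * qPoch ((p ^ i)⁻¹) p j = 0 := by
    refine Finset.sum_eq_zero fun i hi => ?_
    rw [qPoch_vanish hp0 (Finset.mem_range.mp hi), mul_zero]
  rw [this, sub_zero]
  suffices hfun : (fun n => cE p (n + j) * (-R) ^ (n + j) * qPoch ((p ^ (n + j))⁻¹) p j) =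
      fun i => (1 - p) ^ j * (p ^ j)⁻¹ * R ^ j * (cE p i * (-R) ^ i) by
    rw [hfun]
    exact (qExpE_hasSum hp0 hp1 (-R)).mul_left _
  ext n
  have h := cE_qPoch hp0 hp1 j n
  have e : (-R) ^ (n + j) = (-R) ^ n * ((-1) ^ j * R ^ j) := by
    rw [pow_add, ← mul_pow]; ring
  have e2 : ((-1 : ℝ) ^ j) * (-1) ^ j = 1 := by rw [← mul_pow]; simp
  rw [e]
  linear_combination (-R) ^ n * ((-1) ^ j * R ^ j) * h +
    (-R) ^ n * R ^ j * ((1 - p) ^ j * (p ^ j)⁻¹ * cE p n) * e2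

/-- Bessel coefficients -/
def bCo (p x g R : ℝ) (i : ℕ) : ℝ :=
  g * (x ^ i * triP p i ^ 2 * (-R) ^ i * (1 - p) ^ i / (qFact p i * qPoch x p i))

/-- Laguerre coefficients -/
def dCo (p x : ℝ) (j l : ℕ) : ℝ :=
  x ^ l * triP p l ^ 2 * (-1) ^ l / (qFact p (j - l) * qFact p l) *
    (qPoch (x * p ^ l) p (j - l) / (1 - p) ^ (j - l))

lemma bCo_moment {p x : ℝ} (hp0 : 0 < p) (hp1 : p < 1) (hx0 : 0 < x) (hx1 : x < 1)
    {s w : ℤ → ℝ} (hs : ∀ k, 0 < s k) (hw : ∀ k, 0 < w k) (hss : ∀ k, s (k + 1) = p * s k)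
    (hws : ∀ k, w (k + 1) = x * w k * (1 + (1 - p) * s k)) (g R : ℝ) (i l : ℕ) :
    bCo p x g R i * (∑' k, s k ^ (i + l) * w k) =
      g * (∑' k, w k) * (x ^ l * triP p l * (1 - p) ^ l)⁻¹ * qPoch (x * p ^ i) p l *
        (cE p i * (-R * (p ^ l)⁻¹) ^ i) := by
  have h := moment_rec hp0 hp1 hx0 hx1 hs hw hss hws (i + l)
  have hp : (1 - p) ≠ 0 := by linarith
  have h1 := (triP_pos hp0 l).ne'
  have h2 := (triP_pos hp0 i).ne'
  have h3 := (qPoch_pos hp0 hp1 hx1 hx0 i).ne'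
  have h4 := (qFact_pos hp0 hp1 i).ne'
  set M := ∑' k, s k ^ (i + l) * w k
  set M0 := ∑' k, w k
  have hM : M = M0 * qPoch x p (i + l) / (x ^ (i + l) * triP p (i + l) * (1 - p) ^ (i + l)) := by
    rw [eq_div_iff, h]
    have := triP_pos hp0 (i + l)
    positivity
  rw [hM, triP_add, qPoch_add, bCo, cE, mul_pow, inv_pow, ← pow_mul, mul_comm l i, pow_add, pow_add]
  field_simp

lemma double_summable {p x : ℝ} (hp0 : 0 < p) (hp1 : p < 1) (hx0 : 0 < x) (hx1 : x < 1)
    {s w : ℤ → ℝ} (hs : ∀ k, 0 < s k) (hw : ∀ k, 0 < w k) (hss : ∀ k, s (k + 1) = p * s k)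
    (hws : ∀ k, w (k + 1) = x * w k * (1 + (1 - p) * s k)) (g R : ℝ) (l : ℕ) :
    Summable (fun a : ℕ × ℤ => bCo p x g R a.1 * (s a.2 ^ (a.1 + l) * w a.2)) := by
  have hsum := moment_summable hp0 hp1 hx0 hx1 hs hw hss hws
  have hpos : ∀ m k, 0 < s k ^ m * w k := fun m k => mul_pos (pow_pos (hs k) m) (hw k)
  rw [← summable_norm_iff]
  have e : ∀ (i : ℕ) (k : ℤ), ‖bCo p x g R i * (s k ^ (i + l) * w k)‖ =
      |bCo p x g R i| * (s k ^ (i + l) * w k) := by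
    intro i k
    rw [norm_mul, Real.norm_eq_abs, Real.norm_eq_abs, abs_of_pos (hpos _ _)]
  rw [summable_prod_of_nonneg (fun _ => norm_nonneg _)]
  constructor
  · intro i
    simp only [e]
    exact (hsum (i + l)).mul_left _
  · simp only [e, tsum_mul_left]
    have hK := (cE_summable hp0 hp1 (-R * (p ^ l)⁻¹)).norm.mul_left
      |g * (∑' k, w k) * (x ^ l * triP p l * (1 - p) ^ l)⁻¹|
    refine Summable.of_nonneg_of_le (fun i => ?_) (fun i => ?_) hK
    · exact mul_nonneg (abs_nonneg _) (tsum_nonneg fun k => (hpos _ k).le)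
    · have : |bCo p x g R i| * (∑' k, s k ^ (i + l) * w k) =
          |bCo p x g R i * (∑' k, s k ^ (i + l) * w k)| := by
        rw [abs_mul, abs_of_nonneg (a := ∑' k, s k ^ (i + l) * w k)
          (tsum_nonneg fun k => (hpos _ k).le)]
      rw [this, bCo_moment hp0 hp1 hx0 hx1 hs hw hss hws, abs_mul, abs_mul, Real.norm_eq_abs]
      have hxi1 : x * p ^ i < 1 := by
        have : p ^ i ≤ 1 := pow_le_one₀ hp0.le hp1.le
        nlinarith [pow_pos hp0 i]
      have hxi0 : 0 < x * p ^ i := mul_pos hx0 (pow_pos hp0 i)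
      rw [abs_of_pos (qPoch_pos hp0 hp1 hxi1 hxi0 l)]
      apply mul_le_mul_of_nonneg_right _ (abs_nonneg _)
      exact mul_le_of_le_one_right (abs_nonneg _) (qPoch_le_one hp0 hp1 hxi1 hxi0 l)

lemma cv_apply {p x : ℝ} (hp0 : 0 < p) (hp1 : p < 1) (hx0 : 0 < x) (i j : ℕ) :
    ∑ l ∈ Finset.range (j + 1), dCo p x j l * ((x ^ l * triP p l * (1 - p) ^ l)⁻¹ *
      qPoch (x * p ^ i) p l * ((p ^ l)⁻¹) ^ i) =
    ((1 - p) ^ j)⁻¹ * (qFact p j)⁻¹ * qPoch ((p ^ i)⁻¹) p j := by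
  have hp : (1 - p) ≠ 0 := by linarith
  rw [← cvSum_eq hp0 hp1 j x, ← mul_assoc, mul_assoc _ (qFact p j)⁻¹,
    inv_mul_cancel₀ (qFact_pos hp0 hp1 j).ne', mul_one, cvSum, Finset.mul_sum]
  refine Finset.sum_congr rfl fun l hl => ?_
  have hl' : l ≤ j := by simp at hl; omega
  have hprod : ∀ l : ℕ, ∏ m ∈ Finset.range l, (x * p ^ (2 * m) - (p ^ i)⁻¹ * p ^ m) =
      (-1) ^ l * triP p l * ((p ^ i)⁻¹) ^ l * qPoch (x * p ^ i) p l := by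
    intro l
    induction l with
    | zero => simp [triP_zero, qPoch_zero]
    | succ n ih =>
      rw [Finset.prod_range_succ, ih, triP_succ, qPoch_succ]
      have hz : p ^ i * (p ^ i)⁻¹ = 1 := mul_inv_cancel₀ (pow_pos hp0 i).ne'
      generalize (p ^ i)⁻¹ = z at *
      generalize p ^ i = y at *
      linear_combination (-((-1) ^ n * triP p n * z ^ n * qPoch (x * y) p n * x * p ^ (2 * n))) * hz
  rw [hprod, dCo]
  have e1 : (1 - p) ^ j = (1 - p) ^ (j - l) * (1 - p) ^ l := by
    rw [← pow_add]; congr 1; omega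
  have e2 : ((p ^ l)⁻¹) ^ i = ((p ^ i)⁻¹) ^ l := by
    rw [inv_pow, inv_pow, ← pow_mul, ← pow_mul, mul_comm]
  rw [e1, e2]
  have h1 := (triP_pos hp0 l).ne'
  have h4 := (qFact_pos hp0 hp1 l).ne'
  have h5 := (qFact_pos hp0 hp1 (j - l)).ne'
  field_simp

lemma abstract_main {p x : ℝ} (hp0 : 0 < p) (hp1 : p < 1) (hx0 : 0 < x) (hx1 : x < 1)
    {s w : ℤ → ℝ} (hs : ∀ k, 0 < s k) (hw : ∀ k, 0 < w k) (hss : ∀ k, s (k + 1) = p * s k)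
    (hws : ∀ k, w (k + 1) = x * w k * (1 + (1 - p) * s k)) (g R : ℝ) (j : ℕ) :
    HasSum (fun k => (∑' i, bCo p x g R i * s k ^ i) *
      (∑ l ∈ Finset.range (j + 1), dCo p x j l * s k ^ l) * w k)
      (g * (∑' k, w k) * (qFact p j)⁻¹ * (p ^ j)⁻¹ * R ^ j * qExpE p (-R)) := by
  have hp : (1 - p) ≠ 0 := by linarith
  have hds := double_summable hp0 hp1 hx0 hx1 hs hw hss hws g R
  set f : ℕ → ℤ → ℝ := fun i k =>
    ∑ l ∈ Finset.range (j + 1), dCo p x j l * (bCo p x g R i * (s k ^ (i + l) * w k)) with hf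
  have hfs : Summable (Function.uncurry f) :=
    summable_sum (f := fun l (a : ℕ × ℤ) =>
      dCo p x j l * (bCo p x g R a.1 * (s a.2 ^ (a.1 + l) * w a.2)))
      (s := Finset.range (j + 1)) (fun l _ => (hds l).mul_left _) |>.congr (fun a => by
        simp [hf, Function.uncurry])
  have e1 : ∀ k, (∑' i, bCo p x g R i * s k ^ i) *
      (∑ l ∈ Finset.range (j + 1), dCo p x j l * s k ^ l) * w k = ∑' i, f i k := by
    intro k
    rw [← tsum_mul_right, ← tsum_mul_right]
    congr 1; ext i
    simp only [hf]
    rw [Finset.mul_sum, Finset.sum_mul]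
    refine Finset.sum_congr rfl fun l _ => ?_
    ring
  have hsum := moment_summable hp0 hp1 hx0 hx1 hs hw hss hws
  have e2 : ∀ i, ∑' k, f i k = (g * (∑' k, w k) * ((1 - p) ^ j)⁻¹ * (qFact p j)⁻¹) *
      (cE p i * (-R) ^ i * qPoch ((p ^ i)⁻¹) p j) := by
    intro i
    simp only [hf]
    rw [Summable.tsum_finsetSum (fun l _ => ((hsum (i + l)).mul_left _).mul_left _)]
    simp only [tsum_mul_left, bCo_moment hp0 hp1 hx0 hx1 hs hw hss hws]
    have := cv_apply hp0 hp1 hx0 i j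
    have e : g * (∑' k, w k) * ((1 - p) ^ j)⁻¹ * (qFact p j)⁻¹ *
      (cE p i * (-R) ^ i * qPoch ((p ^ i)⁻¹) p j) = (g * (∑' k, w k)) * (cE p i * (-R) ^ i) *
      (((1 - p) ^ j)⁻¹ * (qFact p j)⁻¹ * qPoch ((p ^ i)⁻¹) p j) := by ring
    rw [e, ← this, Finset.mul_sum]
    refine Finset.sum_congr rfl fun l _ => ?_
    rw [mul_pow]; ring
  simp only [e1]
  have hs1 : Summable (fun k => ∑' i, f i k) := hfs.prod_symm.prod
  have h := hs1.hasSum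
  have hcomm : ∑' k, ∑' i, f i k = ∑' i, ∑' k, f i k := hfs.tsum_comm
  rw [hcomm] at h
  simp only [e2, tsum_mul_left, (final_sum hp0 hp1 j R).tsum_eq] at h
  convert h using 1
  field_simp

lemma rpow_coef {q : ℝ} (hq0 : 0 < q) (ν : ℝ) (i : ℕ) :
    q ^ (2 * (i : ℝ) * ((i : ℝ) + ν)) = ((q ^ 2) ^ (ν + 1)) ^ i * triP (q ^ 2) i ^ 2 := by
  have hp : (q ^ 2) ^ i ≠ 0 := by positivity
  rw [← mul_left_inj' hp, mul_assoc (_ ^ i), triP_sq]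
  have e1 : (q ^ 2) ^ i = q ^ (2 * (i : ℝ)) := by
    rw [← pow_mul, ← Real.rpow_natCast]; push_cast; rfl
  have e2 : (q ^ 2) ^ (i * i) = q ^ (2 * (i : ℝ) * i) := by
    rw [← pow_mul, ← Real.rpow_natCast]; push_cast; congr 1; ring
  have e3 : ((q ^ 2) ^ (ν + 1)) ^ i = q ^ (2 * (ν + 1) * i) := by
    rw [← Real.rpow_natCast q 2, ← Real.rpow_mul hq0.le, ← Real.rpow_mul_natCast hq0.le]
    push_cast; rfl
  rw [e1, e2, e3, ← Real.rpow_add hq0, ← Real.rpow_add hq0]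
  congr 1; ring

lemma bessel_eq {q : ℝ} (hq0 : 0 < q) (hq1 : q < 1) {ν : ℝ} (hν : ν > -1) {r t : ℝ}
    (hr : 0 < r) (ht : 0 < t) :
    qBessel2 q ν (q * (r * t)) / (r * t) ^ ν = q ^ (ν ^ 2) * q ^ ν / (1 + q) ^ ν *
      ∑' i, bCo (q ^ 2) ((q ^ 2) ^ (ν + 1)) (qGamma (q ^ 2) (ν + 1))⁻¹ (r ^ 2 / (1 + q)) i *
        (q ^ 2 * t ^ 2 / (1 + q)) ^ i := by
  have hp0 : 0 < q ^ 2 := by positivity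
  have hp1 : q ^ 2 < 1 := by nlinarith
  have hrt : 0 < r * t := by positivity
  unfold qBessel2
  have hsum : (fun i : ℕ => q ^ (2 * (i : ℝ) * ((i : ℝ) + ν)) * (-1 : ℝ) ^ i /
        (qFact (q ^ 2) i * qGamma (q ^ 2) ((i : ℝ) + ν + 1)) *
      (q * (r * t) / (1 + q)) ^ (2 * i)) = fun i =>
      bCo (q ^ 2) ((q ^ 2) ^ (ν + 1)) (qGamma (q ^ 2) (ν + 1))⁻¹ (r ^ 2 / (1 + q)) i *
        (q ^ 2 * t ^ 2 / (1 + q)) ^ i := by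
    ext i
    rw [rpow_coef hq0, qGamma_add hp0 hp1 hν, bCo]
    have e : (-(r ^ 2 / (1 + q))) ^ i * (q ^ 2 * t ^ 2 / (1 + q)) ^ i =
        (-1) ^ i * (q * (r * t) / (1 + q)) ^ (2 * i) := by
      rw [pow_mul, ← mul_pow, ← mul_pow]; congr 1; ring
    have h1 : (1 - q ^ 2) ^ i ≠ 0 := pow_ne_zero _ (by linarith)
    have e3 : ∀ A P f T G Q c N K U V : ℝ, c ≠ 0 → U * V = N * K →
        A * P * N / (f * (G * (Q / c))) * K = G⁻¹ * (A * P * U * c / (f * Q)) * V := by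
      intro A P f T G Q c N K U V hc h
      have : A * P * N / (f * (G * (Q / c))) = G⁻¹ * (A * P * N * c / (f * Q)) := by
        rw [div_eq_mul_inv, div_eq_mul_inv, mul_inv, mul_inv, mul_inv, inv_inv]; ring
      rw [this]
      linear_combination (-(G⁻¹ * (A * P * c / (f * Q)))) * h
    exact e3 _ _ _ 0 _ _ _ _ _ _ _ h1 e
  rw [hsum, Real.div_rpow (by positivity) (by positivity), Real.mul_rpow hq0.le hrt.le]
  have h1 : (r * t) ^ ν ≠ 0 := (Real.rpow_pos_of_pos hrt ν).ne'
  have h2 : (1 + q) ^ ν ≠ 0 := (Real.rpow_pos_of_pos (by positivity) ν).ne'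
  field_simp

lemma laguerre_eq {q : ℝ} (hq0 : 0 < q) (ν : ℝ) (j : ℕ) (u : ℝ) :
    qLaguerreInv q ν j u = q ^ (-(j : ℝ) * ((j : ℝ) + 1 + 2 * ν)) *
      ∑ l ∈ Finset.range (j + 1), dCo (q ^ 2) ((q ^ 2) ^ (ν + 1)) j l * u ^ l := by
  unfold qLaguerreInv
  congr 1
  refine Finset.sum_congr rfl fun l _ => ?_
  have e : q ^ (2 * (l : ℝ) + 2 * ν + 2) = (q ^ 2) ^ (ν + 1) * (q ^ 2) ^ l := by
    rw [← Real.rpow_natCast (q ^ 2) l, ← Real.rpow_natCast q 2, ← Real.rpow_mul hq0.le,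
      ← Real.rpow_mul hq0.le, ← Real.rpow_add hq0]
    congr 1; push_cast; ring
  rw [rpow_coef hq0, e, dCo, neg_pow u]
  ring

/-- second q-Hankel image of a q-Laguerre function: for `ν > -1`, `j ∈ ℕ`,
`γ > 0`, `r > 0`, the bilateral series defining the infinite Jackson integral converges
absolutely and
`∫_0^{γ·∞} d_q t (J^{(2)}_ν(qrt|q²)/(rt)^ν) t^{2ν+1} 𝓛^{(ν)}_j(q²t²/(1+q)|q^{-2})
  e_{q²}(-q²t²/(1+q)) = d (q^{-(j+1)(j+2ν+2)}/[j]_{q²}!) (r^{2j}/(1+q)^j) E_{q²}(-r²/(1+q))`,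
where `d = (q^{(ν+1)(ν+2)}/((1+q)^ν Γ_{q²}(ν+1))) ∫_0^{γ·∞} d_q t t^{2ν+1} e_{q²}(-q²t²/(1+q))`. -/
theorem hankel2_qLaguerre (q : ℝ) (hq0 : 0 < q) (hq1 : q < 1)
    (ν : ℝ) (hν : ν > -1) (j : ℕ) (γ : ℝ) (hγ : 0 < γ) (r : ℝ) (hr : 0 < r) :
    let F : ℝ → ℝ := fun t => qBessel2 q ν (q * (r * t)) / (r * t) ^ ν * t ^ (2 * ν + 1) *
      (qLaguerreInv q ν j (q ^ 2 * t ^ 2 / (1 + q)) * qExpe (q ^ 2) (q ^ 2 * t ^ 2 / (1 + q)))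
    Summable (fun k : ℤ => F (q ^ k * γ) * q ^ k) ∧
    jacksonInf q γ F =
      (q ^ ((ν + 1) * (ν + 2)) / ((1 + q) ^ ν * qGamma (q ^ 2) (ν + 1)) *
        jacksonInf q γ (fun t => t ^ (2 * ν + 1) * qExpe (q ^ 2) (q ^ 2 * t ^ 2 / (1 + q)))) *
      (q ^ (-((j : ℝ) + 1) * ((j : ℝ) + 2 * ν + 2)) / qFact (q ^ 2) j) *
      (r ^ (2 * j) / (1 + q) ^ j) * qExpE (q ^ 2) (-(r ^ 2 / (1 + q))) := by
  intro F
  have hp0 : 0 < q ^ 2 := by positivity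
  have hp1 : q ^ 2 < 1 := by nlinarith
  set s : ℤ → ℝ := fun k => q ^ 2 * (q ^ k * γ) ^ 2 / (1 + q) with hs_def
  set w : ℤ → ℝ := fun k => (q ^ k * γ) ^ (2 * ν + 1) * qExpe (q ^ 2) (s k) * q ^ k with hw_def
  set x : ℝ := (q ^ 2) ^ (ν + 1) with hx
  have hx0 : 0 < x := Real.rpow_pos_of_pos hp0 _
  have hx1 : x < 1 := Real.rpow_lt_one hp0.le hp1 (by linarith)
  have hk : ∀ k : ℤ, 0 < q ^ k := fun k => zpow_pos hq0 k
  have ht : ∀ k : ℤ, 0 < q ^ k * γ := fun k => mul_pos (hk k) hγ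
  have hs : ∀ k, 0 < s k := fun k => by have := ht k; simp only [hs_def]; positivity
  have hE : ∀ k, 0 < qExpE (q ^ 2) (s k) := fun k =>
    lt_of_lt_of_le one_pos (qExpE_ge_one hp0 hp1 (hs k).le)
  have hw : ∀ k, 0 < w k := fun k =>
    mul_pos (mul_pos (Real.rpow_pos_of_pos (ht k) _) (inv_pos.mpr (hE k))) (hk k)
  have hss : ∀ k, s (k + 1) = q ^ 2 * s k := by
    intro k; simp only [hs_def, zpow_add_one₀ hq0.ne']; ring
  have hws : ∀ k, w (k + 1) = x * w k * (1 + (1 - q ^ 2) * s k) := by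
    intro k
    have h1 := qExpE_shift hp0 hp1 (s k)
    have h2 := hE (k + 1)
    have h4 : 0 < 1 + (1 - q ^ 2) * s k := by nlinarith [hs k]
    have h3 : qExpe (q ^ 2) (s (k + 1)) = qExpe (q ^ 2) (s k) * (1 + (1 - q ^ 2) * s k) := by
      rw [qExpe, qExpe, h1, hss]
      rw [mul_inv, mul_right_comm, inv_mul_cancel₀ h4.ne', one_mul]
    have h5 : (q ^ (k + 1) * γ) ^ (2 * ν + 1) = q ^ (2 * ν + 1) * (q ^ k * γ) ^ (2 * ν + 1) := by
      rw [← Real.mul_rpow hq0.le (ht k).le, zpow_add_one₀ hq0.ne']; congr 1; ring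
    have h6 : x = q ^ (2 * ν + 1) * q := by
      rw [hx, ← Real.rpow_add_one hq0.ne', ← Real.rpow_natCast q 2, ← Real.rpow_mul hq0.le]
      congr 1; push_cast; ring
    simp only [hw_def]
    rw [h3, h5, h6, zpow_add_one₀ hq0.ne']; ring
  have main := (abstract_main hp0 hp1 hx0 hx1 hs hw hss hws (qGamma (q ^ 2) (ν + 1))⁻¹
    (r ^ 2 / (1 + q)) j).mul_left
      (q ^ (ν ^ 2) * q ^ ν / (1 + q) ^ ν * q ^ (-(j : ℝ) * ((j : ℝ) + 1 + 2 * ν)))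
  have hF : ∀ k : ℤ, F (q ^ k * γ) * q ^ k =
      q ^ (ν ^ 2) * q ^ ν / (1 + q) ^ ν * q ^ (-(j : ℝ) * ((j : ℝ) + 1 + 2 * ν)) *
      ((∑' i, bCo (q ^ 2) x (qGamma (q ^ 2) (ν + 1))⁻¹ (r ^ 2 / (1 + q)) i * s k ^ i) *
      (∑ l ∈ Finset.range (j + 1), dCo (q ^ 2) x j l * s k ^ l) * w k) := by
    intro k
    simp only [F]
    rw [bessel_eq hq0 hq1 hν hr (ht k), laguerre_eq hq0]
    simp only [hw_def, hs_def]
    ring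
  have hF' : (fun k : ℤ => F (q ^ k * γ) * q ^ k) = _ := funext hF
  rw [← hF'] at main
  refine ⟨main.summable, ?_⟩
  unfold jacksonInf
  rw [main.tsum_eq]
  have hw' : ∀ k : ℤ, (q ^ k * γ) ^ (2 * ν + 1) * qExpe (q ^ 2) (q ^ 2 * (q ^ k * γ) ^ 2 / (1 + q))
    * q ^ k = w k := fun k => rfl
  simp only [hw']
  have hexp : q ^ (ν ^ 2) * q ^ ν * q ^ (-(j : ℝ) * ((j : ℝ) + 1 + 2 * ν)) * ((q ^ 2) ^ j)⁻¹ =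
      q ^ ((ν + 1) * (ν + 2)) * q ^ (-((j : ℝ) + 1) * ((j : ℝ) + 2 * ν + 2)) := by
    have e1 : ((q ^ 2) ^ j)⁻¹ = q ^ (-(2 * (j : ℝ))) := by
      rw [Real.rpow_neg hq0.le, ← pow_mul, ← Real.rpow_natCast]; push_cast; rfl
    rw [e1, ← Real.rpow_add hq0, ← Real.rpow_add hq0, ← Real.rpow_add hq0, ← Real.rpow_add hq0]
    congr 1; ring
  rw [div_pow, ← pow_mul]
  simp only [div_eq_mul_inv, mul_inv]
  linear_combination ((1 - q) * γ * ((1 + q) ^ ν)⁻¹ * (qGamma (q ^ 2) (ν + 1))⁻¹ * (∑' k, w k) *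
    (qFact (q ^ 2) j)⁻¹ * r ^ (2 * j) * ((1 + q) ^ j)⁻¹ *
    qExpE (q ^ 2) (-(r ^ 2 * (1 + q)⁻¹))) * hexp
end
end

section
/- A q-binomial–q-Gamma identity: for every integer l ≥ 1 and every real α, ∑_{j=0}^l (−1)^j q^{j(j−1)} · C(l, j; q²) · ∏_{i=1}^{l−1} [α + i − j]_{q²} = 0, where C(l, j; q²) = [l]_{q²}! / ( [j]_{q²}! [l−j]_{q²}! ) is the q²-binomial coefficient and the product ∏_{i=1}^{l−1} is taken to equal 1 when l = 1. (Equivalently, ∑_{j=0}^l (−1)^j q^{j(j−1)} C(l, j; q²) Γ_{q²}(α+l−j)/Γ_{q²}(α+1−j) = 0.) -/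
open scoped BigOperators

noncomputable section

/-- Gaussian binomial coefficients by the q-Pascal recursion. -/
def gaussB (p : ℝ) : ℕ → ℕ → ℝ
  | _, 0 => 1
  | 0, _ + 1 => 0
  | n + 1, k + 1 => p ^ (k + 1) * gaussB p n (k + 1) + gaussB p n k

lemma gaussB_zero (p : ℝ) (n : ℕ) : gaussB p n 0 = 1 := by
  cases n <;> simp [gaussB]

lemma gaussB_gt (p : ℝ) (n : ℕ) : ∀ k, n < k → gaussB p n k = 0 := by
  induction n with
  | zero =>
    intro k hk
    obtain ⟨k, rfl⟩ := Nat.exists_eq_succ_of_ne_zero (by omega : k ≠ 0)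
    simp [gaussB]
  | succ n ih =>
    intro k hk
    obtain ⟨k, rfl⟩ := Nat.exists_eq_succ_of_ne_zero (by omega : k ≠ 0)
    simp [gaussB, ih (k + 1) (by omega), ih k (by omega)]

lemma qFact_succ_aux (p : ℝ) (n : ℕ) :
    qFact p (n + 1) = qFact p n * ((p ^ (n + 1) - 1) / (p - 1)) := by
  unfold qFact
  rw [Finset.prod_range_succ]
  congr 1
  unfold qNum
  congr 2
  rw [← Real.rpow_natCast]
  push_cast
  rfl

lemma gaussB_fact (p : ℝ) (hp : p - 1 ≠ 0) (n : ℕ) :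
    ∀ a b, a + b = n → gaussB p n a * (qFact p a * qFact p b) = qFact p n := by
  induction n with
  | zero =>
    intro a b h
    obtain ⟨rfl, rfl⟩ : a = 0 ∧ b = 0 := by omega
    simp [gaussB, qFact]
  | succ n ih =>
    intro a b h
    rcases a with _ | a
    · obtain rfl : b = n + 1 := by omega
      simp [gaussB, qFact]
    rcases b with _ | b
    · obtain rfl : a = n := by omega
      have h1 := ih a 0 (by omega)
      simp only [gaussB, gaussB_gt p a (a + 1) (by omega), qFact_succ_aux]
      linear_combination ((p ^ (a + 1) - 1) / (p - 1)) * h1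
    · have h1 := ih a (b + 1) (by omega)
      have h2 := ih (a + 1) b (by omega)
      obtain rfl : n = a + b + 1 := by omega
      rw [qFact_succ_aux p (a + b + 1)]
      rw [show gaussB p (a + b + 1 + 1) (a + 1) = p ^ (a + 1) * gaussB p (a + b + 1) (a + 1) +
        gaussB p (a + b + 1) a from rfl]
      have e : (p ^ (a + b + 1 + 1) - 1) / (p - 1) =
          p ^ (a + 1) * ((p ^ (b + 1) - 1) / (p - 1)) + (p ^ (a + 1) - 1) / (p - 1) := by
        field_simp
        ring
      rw [e]
      rw [qFact_succ_aux p b] at *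
      rw [qFact_succ_aux p a] at *
      linear_combination p ^ (a + 1) * ((p ^ (b + 1) - 1) / (p - 1)) * h2 +
        ((p ^ (a + 1) - 1) / (p - 1)) * h1

/-- The q-binomial theorem. -/
lemma gaussB_sum (q : ℝ) (n : ℕ) : ∀ y : ℝ,
    ∑ j ∈ Finset.range (n + 1), (-1 : ℝ) ^ j * q ^ (j * (j - 1)) * gaussB (q ^ 2) n j * y ^ j
      = ∏ i ∈ Finset.range n, (1 - (q ^ 2) ^ i * y) := by
  induction n with
  | zero => intro y; simp [gaussB]
  | succ n ih =>
    intro y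
    rw [Finset.prod_range_succ']
    have e : ∏ i ∈ Finset.range n, (1 - (q ^ 2) ^ (i + 1) * y) =
        ∏ i ∈ Finset.range n, (1 - (q ^ 2) ^ i * (q ^ 2 * y)) :=
      Finset.prod_congr rfl fun i _ => by ring
    rw [e, ← ih (q ^ 2 * y), Finset.sum_range_succ']
    have hq (k : ℕ) : q ^ ((k + 1) * (k + 1 - 1)) = q ^ (k * (k - 1)) * (q ^ 2) ^ k := by
      rw [← pow_mul, ← pow_add]
      congr 1
      rcases k with _ | k
      · simp
      · simp only [Nat.add_sub_cancel]; ring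
    have t (k : ℕ) : (-1 : ℝ) ^ (k + 1) * q ^ ((k + 1) * (k + 1 - 1)) *
        gaussB (q ^ 2) (n + 1) (k + 1) * y ^ (k + 1) =
        (-1 : ℝ) ^ (k + 1) * q ^ ((k + 1) * (k + 1 - 1)) *
          gaussB (q ^ 2) n (k + 1) * (q ^ 2 * y) ^ (k + 1)
        - y * ((-1 : ℝ) ^ k * q ^ (k * (k - 1)) * gaussB (q ^ 2) n k * (q ^ 2 * y) ^ k) := by
      rw [hq]
      simp only [gaussB]
      ring
    rw [Finset.sum_congr rfl fun k _ => t k, Finset.sum_sub_distrib, ← Finset.mul_sum]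
    have s := Finset.sum_range_succ' (fun k => (-1 : ℝ) ^ k * q ^ (k * (k - 1)) *
      gaussB (q ^ 2) n k * (q ^ 2 * y) ^ k) (n + 1)
    rw [Finset.sum_range_succ, gaussB_gt _ n (n + 1) (by omega)] at s
    simp only [gaussB_zero] at *
    linear_combination -s

lemma gaussB_poly (q : ℝ) (hq : 0 < q) (n : ℕ) (P : Polynomial ℝ) (hP : P.natDegree < n) :
    ∑ j ∈ Finset.range (n + 1), (-1 : ℝ) ^ j * q ^ (j * (j - 1)) * gaussB (q ^ 2) n j *
      P.eval (((q ^ 2) ^ j)⁻¹) = 0 := by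
  simp only [Polynomial.eval_eq_sum_range' hP, Finset.mul_sum]
  rw [Finset.sum_comm]
  refine Finset.sum_eq_zero fun m hm => ?_
  have h := gaussB_sum q n (((q ^ 2) ^ m)⁻¹)
  rw [Finset.prod_eq_zero hm (by field_simp; simp)] at h
  calc _ = P.coeff m * ∑ j ∈ Finset.range (n + 1), (-1 : ℝ) ^ j * q ^ (j * (j - 1)) *
        gaussB (q ^ 2) n j * (((q ^ 2) ^ m)⁻¹) ^ j := by
        rw [Finset.mul_sum]
        refine Finset.sum_congr rfl fun j _ => ?_
        rw [inv_pow, inv_pow, ← pow_mul, ← pow_mul, ← pow_mul, ← pow_mul,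
          mul_comm j m]
        ring
    _ = 0 := by rw [h, mul_zero]

/-- a q-binomial–q-Gamma identity: for every integer `l ≥ 1` and real `α`,
`∑_{j=0}^l (-1)^j q^{j(j-1)} C(l,j;q²) ∏_{i=1}^{l-1} [α+i-j]_{q²} = 0`, where
`C(l,j;q²) = [l]_{q²}!/([j]_{q²}! [l-j]_{q²}!)` and the empty product (for `l = 1`) is `1`. -/
theorem qBinomial_qGamma_identity (q : ℝ) (hq0 : 0 < q) (hq1 : q < 1)
    (l : ℕ) (hl : 1 ≤ l) (α : ℝ) :
    ∑ j ∈ Finset.range (l + 1),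
      (-1 : ℝ) ^ j * q ^ (j * (j - 1)) *
        (qFact (q ^ 2) l / (qFact (q ^ 2) j * qFact (q ^ 2) (l - j))) *
        ∏ i ∈ Finset.range (l - 1), qNum (q ^ 2) (α + ((i : ℝ) + 1) - (j : ℝ)) = 0 := by
  have hp0 : 0 < q ^ 2 := by positivity
  have hp1 : q ^ 2 - 1 ≠ 0 := by nlinarith
  have hF (n : ℕ) : qFact (q ^ 2) n ≠ 0 := by
    induction n with
    | zero => simp [qFact]
    | succ n ih =>
      rw [qFact_succ_aux]
      refine mul_ne_zero ih (div_ne_zero ?_ hp1)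
      have : (q ^ 2) ^ (n + 1) < 1 := pow_lt_one₀ hp0.le (by nlinarith) (by omega)
      linarith
  let P : Polynomial ℝ := ∏ i ∈ Finset.range (l - 1),
    (Polynomial.C ((q ^ 2) ^ (α + ((i : ℝ) + 1)) / (q ^ 2 - 1)) * Polynomial.X
      + Polynomial.C (-1 / (q ^ 2 - 1)))
  have hP : P.natDegree < l := by
    have h1 : P.natDegree ≤ ∑ i ∈ Finset.range (l - 1), 1 :=
      (Polynomial.natDegree_prod_le _ _).trans
        (Finset.sum_le_sum fun i _ => Polynomial.natDegree_linear_le)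
    simp at h1
    omega
  rw [← gaussB_poly q hq0 l P hP]
  refine Finset.sum_congr rfl fun j hj => ?_
  have hj' : j ≤ l := by simpa [Nat.lt_succ_iff] using hj
  have hb := gaussB_fact (q ^ 2) hp1 l j (l - j) (by omega)
  rw [← hb, mul_div_cancel_right₀ _ (mul_ne_zero (hF _) (hF _))]
  congr 1
  simp only [P, Polynomial.eval_prod]
  refine Finset.prod_congr rfl fun i _ => ?_
  unfold qNum
  rw [Real.rpow_sub hp0, Real.rpow_natCast]
  simp
  ring
end
end
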